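/- arXiv:1709.04342 — 3 statements merged into one kernel-verified Lean document; each statement's English description precedes it below -/
import Mathlib

section
/- In the same normalized exponential family setting, suppose for each n a subset γ_n ⊆ {1,…,p_n} is given, with G_n = θ*_n − (θ*_n)_{γ_n} satisfying ‖G_n‖ → 0 as n → ∞, and suppose there is a constant C independent of n such that A_n is finite in a neighborhood of the segment joining θ*_n and (θ*_n)_{γ_n}, and for every θ on that segment and every unit vector a ∈ ℝ^{p_n}, |E[(aᵀV_θ)³]| ≤ C and E[(aᵀV_θ)⁴] ≤ C. Then |A_n((θ*_n)_{γ_n}) − A_n(θ*_n)| = ‖G_n‖²/2 + o(‖G_n‖²) as n → ∞. -/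
open MeasureTheory ProbabilityTheory Filter

/-- Cumulant function `A(θ) = log ∫ exp(θᵀy) dν(y)` of a natural exponential family. -/
noncomputable def cumulant {p : ℕ} (ν : Measure (Fin p → ℝ)) (θ : Fin p → ℝ) : ℝ :=
  Real.log (∫ y, Real.exp (∑ j, θ j * y j) ∂ν)

/-- The exponential-family distribution with density `exp(θᵀy − A(θ))` w.r.t. `ν`. -/
noncomputable def expFam {p : ℕ} (ν : Measure (Fin p → ℝ)) (θ : Fin p → ℝ) :
    Measure (Fin p → ℝ) :=
  ν.withDensity fun y => ENNReal.ofReal (Real.exp ((∑ j, θ j * y j) - cumulant ν θ))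

/-- Mean vector of the exponential-family distribution with parameter `θ`. -/
noncomputable def expFamMean {p : ℕ} (ν : Measure (Fin p → ℝ)) (θ : Fin p → ℝ)
    (j : Fin p) : ℝ :=
  ∫ y, y j ∂(expFam ν θ)

lemma calc_aux (m : ℕ → ℝ → ℝ) (v K : ℝ)
    (hd : ∀ k, ∀ t ∈ Set.Icc (0:ℝ) 1, HasDerivAt (m k) (m (k+1) t) t)
    (hpos : ∀ t ∈ Set.Icc (0:ℝ) 1, 0 < m 0 t)
    (h0 : m 0 0 = 1) (h1 : m 1 0 = 0) (h2 : m 2 0 = v)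
    (hK : ∀ t ∈ Set.Icc (0:ℝ) 1,
      |m 3 t / m 0 t - 3 * (m 1 t / m 0 t) * (m 2 t / m 0 t) + 2 * (m 1 t / m 0 t) ^ 3| ≤ K) :
    |Real.log (m 0 1) - v / 2| ≤ K := by
  have z : (0:ℝ) ∈ Set.Icc (0:ℝ) 1 := by simp
  have o : (1:ℝ) ∈ Set.Icc (0:ℝ) 1 := by simp
  have hK0 : 0 ≤ K := (abs_nonneg _).trans (hK 0 z)
  have key : ∀ (f f' : ℝ → ℝ), f 0 = 0 →
      (∀ t ∈ Set.Icc (0:ℝ) 1, HasDerivAt f (f' t) t) →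
      (∀ t ∈ Set.Icc (0:ℝ) 1, |f' t| ≤ K) → ∀ t ∈ Set.Icc (0:ℝ) 1, |f t| ≤ K := by
    intro f f' hf0 hf hb t ht
    have := Convex.norm_image_sub_le_of_norm_hasDerivWithin_le
      (fun x hx => (hf x hx).hasDerivWithinAt) hb (convex_Icc (0:ℝ) 1) z ht
    rw [hf0, sub_zero, sub_zero, Real.norm_eq_abs, Real.norm_eq_abs, abs_of_nonneg ht.1] at this
    nlinarith [ht.2]
  have k2 := key (fun t => (m 2 t * m 0 t - m 1 t ^ 2) / (m 0 t) ^ 2 - v) _ (by simp [h0, h1, h2])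
    (fun t ht => by
      refine HasDerivAt.congr_deriv ((((hd 2 t ht).mul (hd 0 t ht)).sub ((hd 1 t ht).pow 2)).div
        ((hd 0 t ht).pow 2) (pow_ne_zero 2 (hpos t ht).ne') |>.sub_const v) ?_
      have := (hpos t ht).ne'
      show _ = m 3 t / m 0 t - 3 * (m 1 t / m 0 t) * (m 2 t / m 0 t) + 2 * (m 1 t / m 0 t) ^ 3
      simp
      field_simp
      ring) hK
  have k1 := key (fun t => m 1 t / m 0 t - v * t) _ (by simp [h1])
    (fun t ht => by
      refine HasDerivAt.congr_deriv (((hd 1 t ht).div (hd 0 t ht) (hpos t ht).ne').sub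
        ((hasDerivAt_id t).const_mul v)) ?_
      show _ = (m 2 t * m 0 t - m 1 t ^ 2) / (m 0 t) ^ 2 - v
      simp
      ring) k2
  have k0 := key (fun t => Real.log (m 0 t) - v * t ^ 2 / 2) _ (by simp [h0])
    (fun t ht => by
      refine HasDerivAt.congr_deriv (((hd 0 t ht).log (hpos t ht).ne').sub
        ((((hasDerivAt_id t).pow 2).const_mul v).div_const 2)) ?_
      show _ = m 1 t / m 0 t - v * t
      simp
      ring) k1
  simpa using k0 1 o

/-- partition function -/
noncomputable def ZZ {p : ℕ} (ν : Measure (Fin p → ℝ)) (θ : Fin p → ℝ) : ℝ :=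
  ∫ y, Real.exp (∑ j, θ j * y j) ∂ν

lemma meas_dens {p : ℕ} (ν : Measure (Fin p → ℝ)) (θ : Fin p → ℝ) :
    Measurable fun y : Fin p → ℝ =>
      ENNReal.ofReal (Real.exp ((∑ j, θ j * y j) - cumulant ν θ)) := by
  fun_prop

lemma dens_eq {p : ℕ} (ν : Measure (Fin p → ℝ)) (θ : Fin p → ℝ) (hZ : 0 < ZZ ν θ)
    (y : Fin p → ℝ) :
    (ENNReal.ofReal (Real.exp ((∑ j, θ j * y j) - cumulant ν θ))).toReal
      = (ZZ ν θ)⁻¹ * Real.exp (∑ j, θ j * y j) := by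
  rw [ENNReal.toReal_ofReal (Real.exp_pos _).le, Real.exp_sub, cumulant, ← ZZ, Real.exp_log hZ]
  ring

lemma integral_expFam {p : ℕ} (ν : Measure (Fin p → ℝ)) (θ : Fin p → ℝ) (hZ : 0 < ZZ ν θ)
    (f : (Fin p → ℝ) → ℝ) :
    ∫ y, f y ∂(expFam ν θ) = (ZZ ν θ)⁻¹ * ∫ y, Real.exp (∑ j, θ j * y j) * f y ∂ν := by
  rw [expFam, integral_withDensity_eq_integral_toReal_smul (meas_dens ν θ) (by simp),
    ← integral_const_mul]
  congr 1
  ext y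
  rw [dens_eq ν θ hZ, smul_eq_mul, mul_assoc]

lemma integrable_expFam {p : ℕ} (ν : Measure (Fin p → ℝ)) (θ : Fin p → ℝ) (hZ : 0 < ZZ ν θ)
    (f : (Fin p → ℝ) → ℝ) (hf : Integrable (fun y => Real.exp (∑ j, θ j * y j) * f y) ν) :
    Integrable f (expFam ν θ) := by
  rw [expFam, integrable_withDensity_iff_integrable_smul' (meas_dens ν θ) (by simp)]
  refine (hf.const_mul (ZZ ν θ)⁻¹).congr (ae_of_all _ fun y => ?_)
  simp only []
  rw [dens_eq ν θ hZ, smul_eq_mul, mul_assoc]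

lemma prob_expFam {p : ℕ} (ν : Measure (Fin p → ℝ)) (θ : Fin p → ℝ) (hZ : 0 < ZZ ν θ)
    (hi : Integrable (fun y => Real.exp (∑ j, θ j * y j)) ν) :
    IsProbabilityMeasure (expFam ν θ) := by
  have h := integral_expFam ν θ hZ (fun _ => 1)
  have hI := integrable_expFam ν θ hZ (fun _ => 1) (by simpa using hi)
  have : (ZZ ν θ)⁻¹ * ∫ y, Real.exp (∑ j, θ j * y j) * 1 ∂ν = 1 := by
    simp only [mul_one]
    exact inv_mul_cancel₀ hZ.ne'
  rw [this] at h
  have fin : IsFiniteMeasure (expFam ν θ) := by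
    rcases (integrable_const_iff.1 hI) with h | h
    · norm_num at h
    · exact h
  constructor
  simp [Measure.real] at h
  exact (ENNReal.toReal_eq_one_iff _).1 h

lemma exp_shift {p : ℕ} (θ u y : Fin p → ℝ) (t : ℝ) :
    Real.exp (∑ j, θ j * y j) * Real.exp (t * ∑ j, u j * y j)
      = Real.exp (∑ j, (θ j + t * u j) * y j) := by
  rw [← Real.exp_add, Finset.mul_sum, ← Finset.sum_add_distrib]
  congr 2
  ext j
  ring

lemma mem_int {p : ℕ} (ν : Measure (Fin p → ℝ)) (θ u : Fin p → ℝ) (hZ : 0 < ZZ ν θ) (t ε : ℝ)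
    (hε : 0 < ε)
    (h : ∀ θ' : Fin p → ℝ, ∑ j, (θ' j - (θ j + t * u j)) ^ 2 < ε ^ 2 →
      Integrable (fun y => Real.exp (∑ j, θ' j * y j)) ν) :
    t ∈ interior (integrableExpSet (fun y => ∑ j, u j * y j) (expFam ν θ)) := by
  rw [mem_interior_iff_mem_nhds]
  have hc : Continuous fun s : ℝ => ∑ j, ((θ j + s * u j) - (θ j + t * u j)) ^ 2 := by fun_prop
  have : ∀ᶠ s in nhds t, ∑ j, ((θ j + s * u j) - (θ j + t * u j)) ^ 2 < ε ^ 2 := by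
    refine hc.continuousAt.eventually_lt continuousAt_const ?_
    simp
    positivity
  filter_upwards [this] with s hs
  refine integrable_expFam ν θ hZ _ ?_
  simp_rw [exp_shift]
  exact h _ hs

lemma moments {p : ℕ} (ν : Measure (Fin p → ℝ)) (θ : Fin p → ℝ) (hZ : 0 < ZZ ν θ) (ε : ℝ)
    (hε : 0 < ε)
    (h : ∀ θ' : Fin p → ℝ, ∑ j, (θ' j - θ j) ^ 2 < ε ^ 2 →
      Integrable (fun y => Real.exp (∑ j, θ' j * y j)) ν) (j : Fin p) :
    MemLp (fun y : Fin p → ℝ => y j) 2 (expFam ν θ) := by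
  have := mem_int ν θ (Pi.single j 1) hZ 0 ε hε (by simpa using h)
  simpa [Pi.single_apply] using memLp_of_mem_interior_integrableExpSet this 2

lemma one_bound {p : ℕ} (ν : Measure (Fin p → ℝ)) (θ θ' G : Fin p → ℝ) (C ε : ℝ)
    (hG : ∀ j, G j = θ j - θ' j)
    (hmean0 : ∀ j, ∫ y, y j ∂(expFam ν θ) = 0)
    (hcov : ∀ j l, ∫ y, y j * y l ∂(expFam ν θ) = if j = l then (1 : ℝ) else 0)
    (hε : 0 < ε)
    (hA : ∀ η : Fin p → ℝ,
      (∃ s ∈ segment ℝ θ θ', ∑ j, (η j - s j) ^ 2 < ε ^ 2) →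
      Integrable (fun y => Real.exp (∑ j, η j * y j)) ν ∧
        0 < ∫ y, Real.exp (∑ j, η j * y j) ∂ν)
    (hm3 : ∀ η ∈ segment ℝ θ θ', ∀ a : Fin p → ℝ,
      (∑ j, (a j) ^ 2) = 1 →
      |∫ y, (∑ j, a j * (y j - expFamMean ν η j)) ^ 3 ∂(expFam ν η)| ≤ C)
    (hGpos : 0 < ∑ j, (G j) ^ 2) :
    |cumulant ν θ' - cumulant ν θ - (∑ j, (G j) ^ 2) / 2|
      ≤ C * (Real.sqrt (∑ j, (G j) ^ 2)) ^ 3 := by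
  set r := Real.sqrt (∑ j, (G j) ^ 2) with hr
  have hrpos : 0 < r := Real.sqrt_pos.2 hGpos
  have hr2 : r ^ 2 = ∑ j, (G j) ^ 2 := Real.sq_sqrt hGpos.le
  set η : ℝ → Fin p → ℝ := fun t j => θ j + t * (- G j) with hη
  have hseg : ∀ t ∈ Set.Icc (0:ℝ) 1, η t ∈ segment ℝ θ θ' := by
    intro t ht
    refine ⟨1 - t, t, by linarith [ht.2], ht.1, by ring, ?_⟩
    ext j
    simp [hη, hG]
    ring
  have hη0 : η 0 = θ := by ext j; simp [hη]
  have hη1 : η 1 = θ' := by ext j; simp [hη, hG]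
  have hball : ∀ t ∈ Set.Icc (0:ℝ) 1, ∀ θ' : Fin p → ℝ, ∑ j, (θ' j - η t j) ^ 2 < ε ^ 2 →
      Integrable (fun y => Real.exp (∑ j, θ' j * y j)) ν :=
    fun t ht θ' h => (hA θ' ⟨η t, hseg t ht, h⟩).1
  have hI : ∀ t ∈ Set.Icc (0:ℝ) 1, Integrable (fun y => Real.exp (∑ j, η t j * y j)) ν :=
    fun t ht => (hA (η t) ⟨η t, hseg t ht, by simp; positivity⟩).1
  have hZ : ∀ t ∈ Set.Icc (0:ℝ) 1, 0 < ZZ ν (η t) :=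
    fun t ht => (hA (η t) ⟨η t, hseg t ht, by simp; positivity⟩).2
  have z : (0:ℝ) ∈ Set.Icc (0:ℝ) 1 := by simp
  have o : (1:ℝ) ∈ Set.Icc (0:ℝ) 1 := by simp
  have hZ0 : 0 < ZZ ν θ := hη0 ▸ hZ 0 z
  set X : (Fin p → ℝ) → ℝ := fun y => ∑ j, (- G j) * y j with hX
  have hint : ∀ t ∈ Set.Icc (0:ℝ) 1, t ∈ interior (integrableExpSet X (expFam ν θ)) :=
    fun t ht => mem_int ν θ _ hZ0 t ε hε (hball t ht)
  have hint' : ∀ t ∈ Set.Icc (0:ℝ) 1, (0:ℝ) ∈ interior (integrableExpSet X (expFam ν (η t))) :=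
    fun t ht => mem_int ν (η t) _ (hZ t ht) 0 ε hε (by simpa using hball t ht)
  have hLp : ∀ t ∈ Set.Icc (0:ℝ) 1, ∀ j,
      MemLp (fun y : Fin p → ℝ => y j) 2 (expFam ν (η t)) :=
    fun t ht j => moments ν (η t) (hZ t ht) ε hε (hball t ht) j
  have hprob : ∀ t ∈ Set.Icc (0:ℝ) 1, IsProbabilityMeasure (expFam ν (η t)) :=
    fun t ht => prob_expFam ν (η t) (hZ t ht) (hI t ht)
  set m : ℕ → ℝ → ℝ := fun k t => ∫ y, X y ^ k * Real.exp (t * X y) ∂(expFam ν θ) with hm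
  have hmq : ∀ t ∈ Set.Icc (0:ℝ) 1, ∀ k,
      m k t = ZZ ν (η t) / ZZ ν θ * ∫ y, X y ^ k ∂(expFam ν (η t)) := by
    intro t ht k
    rw [hm, integral_expFam ν (η t) (hZ t ht)]
    simp only []
    rw [integral_expFam ν θ hZ0]
    have e : ∀ y, Real.exp (∑ j, θ j * y j) * (X y ^ k * Real.exp (t * X y))
        = Real.exp (∑ j, η t j * y j) * X y ^ k := by
      intro y
      rw [← exp_shift θ (fun j => - G j) y t]
      ring
    simp_rw [e]
    have := (hZ t ht).ne'
    field_simp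
  have hm0 : ∀ t ∈ Set.Icc (0:ℝ) 1, m 0 t = ZZ ν (η t) / ZZ ν θ := by
    intro t ht
    have := hprob t ht
    rw [hmq t ht]
    simp
  have hdiv : ∀ t ∈ Set.Icc (0:ℝ) 1, ∀ k,
      m k t / m 0 t = ∫ y, X y ^ k ∂(expFam ν (η t)) := by
    intro t ht k
    rw [hm0 t ht, hmq t ht]
    have := (hZ t ht).ne'
    field_simp
  have m00 : m 0 0 = 1 := by rw [hm0 0 z, hη0, div_self hZ0.ne']
  have m10 : m 1 0 = 0 := by
    have := hdiv 0 z 1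
    rw [m00, div_one] at this
    rw [this, hη0]
    simp only [pow_one, hX]
    rw [integral_finsetSum]
    · simp [integral_const_mul, integral_neg, hmean0]
    · intro j _
      have := hprob 0 z
      have := (hLp 0 z j).integrable (by norm_num)
      rw [hη0] at this
      exact this.const_mul _
  have m20 : m 2 0 = ∑ j, (G j) ^ 2 := by
    have := hdiv 0 z 2
    rw [m00, div_one] at this
    rw [this, hη0]
    have e : ∀ y, X y ^ 2 = ∑ j, ∑ l, (G j * G l) * (y j * y l) := by
      intro y
      rw [sq, hX]
      simp only []
      rw [Finset.sum_mul_sum]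
      refine Finset.sum_congr rfl fun j _ => Finset.sum_congr rfl fun l _ => ?_
      ring
    have hi : ∀ j l, Integrable (fun y : Fin p → ℝ => (G j * G l) * (y j * y l))
        (expFam ν θ) := by
      intro j l
      have := (hLp 0 z j).integrable_mul (hLp 0 z l)
      rw [hη0] at this
      exact this.const_mul _
    simp_rw [e]
    rw [integral_finsetSum _ (fun j _ => integrable_finsetSum _ fun l _ => hi j l)]
    refine Finset.sum_congr rfl fun j _ => ?_
    rw [integral_finsetSum _ (fun l _ => hi j l)]
    simp [integral_const_mul, hcov, sq]
  have key := calc_aux m (∑ j, (G j) ^ 2) (C * r ^ 3)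
    (fun k t ht => hasDerivAt_integral_pow_mul_exp_real (hint t ht) k)
    (fun t ht => by rw [hm0 t ht]; exact div_pos (hZ t ht) hZ0) m00 m10 m20 ?_
  · rw [hm0 1 o, Real.log_div (hZ 1 o).ne' hZ0.ne', hη1] at key
    exact key
  · intro t ht
    rw [hdiv t ht, hdiv t ht, hdiv t ht]
    have := hprob t ht
    set Q := expFam ν (η t) with hQ
    set q := ∫ y, X y ^ 1 ∂Q with hq
    have i1 : Integrable (fun y => X y ^ 1) Q :=
      integrable_pow_of_mem_interior_integrableExpSet (hint' t ht) 1
    have i2 : Integrable (fun y => X y ^ 2) Q :=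
      integrable_pow_of_mem_interior_integrableExpSet (hint' t ht) 2
    have i3 : Integrable (fun y => X y ^ 3) Q :=
      integrable_pow_of_mem_interior_integrableExpSet (hint' t ht) 3
    have cent : ∫ y, (X y - q) ^ 3 ∂Q
        = (∫ y, X y ^ 3 ∂Q) - 3 * q * (∫ y, X y ^ 2 ∂Q) + 2 * q ^ 3 := by
      have e : ∀ y, (X y - q) ^ 3
          = X y ^ 3 - 3 * q * X y ^ 2 + 3 * q ^ 2 * X y ^ 1 - q ^ 3 := by intro y; ring
      simp_rw [e]
      have j2 : Integrable (fun y => 3 * q * X y ^ 2) Q := i2.const_mul _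
      have j1 : Integrable (fun y => 3 * q ^ 2 * X y ^ 1) Q := i1.const_mul _
      have j32 : Integrable (fun y => X y ^ 3 - 3 * q * X y ^ 2) Q := i3.sub j2
      have j321 : Integrable (fun y => X y ^ 3 - 3 * q * X y ^ 2 + 3 * q ^ 2 * X y ^ 1) Q :=
        j32.add j1
      rw [integral_sub j321 (integrable_const _), integral_add j32 j1,
        integral_sub i3 j2, integral_const_mul, integral_const_mul, ← hq]
      simp
      ring
    rw [← cent]
    have hqm : q = ∑ j, (- G j) * expFamMean ν (η t) j := by
      rw [hq]
      simp only [pow_one, hX]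
      rw [integral_finsetSum]
      · simp only [integral_const_mul, expFamMean, hQ]
      · intro j _
        exact ((hLp t ht j).integrable (by norm_num)).const_mul _
    have hXe : ∀ y, (X y - q) ^ 3
        = r ^ 3 * (∑ j, (- G j / r) * (y j - expFamMean ν (η t) j)) ^ 3 := by
      intro y
      rw [← mul_pow, hqm, hX]
      congr 1
      simp only []
      rw [← Finset.sum_sub_distrib, Finset.mul_sum]
      refine Finset.sum_congr rfl fun j _ => ?_
      field_simp
      ring
    simp_rw [hXe]
    rw [integral_const_mul, abs_mul, abs_of_pos (pow_pos hrpos 3), mul_comm]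
    refine mul_le_mul_of_nonneg_right (hm3 _ (hseg t ht) _ ?_) (by positivity)
    simp only [div_pow, neg_sq]
    rw [← Finset.sum_div, ← hr2, div_self (by positivity)]

/-- **Lemma 2**: in the normalized exponential family setting, if
`G_n = θ*_n − (θ*_n)_{γ_n} → 0`, the cumulant function is finite near the segment
joining `θ*_n` and `(θ*_n)_{γ_n}`, and the third and fourth directional moments of the
centered variables are bounded along that segment, then
`|A_n((θ*_n)_{γ_n}) − A_n(θ*_n)| = ‖G_n‖²/2 + o(‖G_n‖²)`. -/
theorem cumulant_second_order_approx
    (C : ℝ) (hC : 0 < C)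
    (p : ℕ → ℕ)
    (ν : ∀ n, Measure (Fin (p n) → ℝ)) (hν : ∀ n, SigmaFinite (ν n))
    (θstar : ∀ n, Fin (p n) → ℝ)
    -- normalization at `θ*`: well-defined cumulant, mean zero, identity covariance
    (hA0 : ∀ n, Integrable (fun y => Real.exp (∑ j, θstar n j * y j)) (ν n) ∧
      0 < ∫ y, Real.exp (∑ j, θstar n j * y j) ∂(ν n))
    (hmean0 : ∀ n j, ∫ y, y j ∂(expFam (ν n) (θstar n)) = 0)
    (hcov : ∀ n j l, ∫ y, y j * y l ∂(expFam (ν n) (θstar n))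
      = if j = l then (1 : ℝ) else 0)
    -- the models, the truncated parameters `(θ*)_γ`, and `G_n = θ* − (θ*)_γ`
    (γ : ∀ n, Finset (Fin (p n)))
    (θγ : ∀ n, Fin (p n) → ℝ)
    (hθγ : ∀ n j, θγ n j = if j ∈ γ n then θstar n j else 0)
    (G : ∀ n, Fin (p n) → ℝ) (hGdef : ∀ n j, G n j = θstar n j - θγ n j)
    (hG0 : Tendsto (fun n => Real.sqrt (∑ j, (G n j) ^ 2)) atTop (nhds 0))
    -- `A_n` is finite in a neighborhood of the segment joining `θ*` and `(θ*)_γ`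
    (hAfin : ∀ n, ∃ ε : ℝ, 0 < ε ∧ ∀ θ : Fin (p n) → ℝ,
      (∃ s ∈ segment ℝ (θstar n) (θγ n), ∑ j, (θ j - s j) ^ 2 < ε ^ 2) →
      Integrable (fun y => Real.exp (∑ j, θ j * y j)) (ν n) ∧
        0 < ∫ y, Real.exp (∑ j, θ j * y j) ∂(ν n))
    -- bounded third and fourth directional moments of `V_θ` along the segment
    (hm3 : ∀ n, ∀ θ ∈ segment ℝ (θstar n) (θγ n), ∀ a : Fin (p n) → ℝ,
      (∑ j, (a j) ^ 2) = 1 →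
      |∫ y, (∑ j, a j * (y j - expFamMean (ν n) θ j)) ^ 3 ∂(expFam (ν n) θ)| ≤ C)
    (hm4 : ∀ n, ∀ θ ∈ segment ℝ (θstar n) (θγ n), ∀ a : Fin (p n) → ℝ,
      (∑ j, (a j) ^ 2) = 1 →
      ∫ y, (∑ j, a j * (y j - expFamMean (ν n) θ j)) ^ 4 ∂(expFam (ν n) θ) ≤ C) :
    Tendsto
      (fun n =>
        (|cumulant (ν n) (θγ n) - cumulant (ν n) (θstar n)|
            - (∑ j, (G n j) ^ 2) / 2)
          / (∑ j, (G n j) ^ 2))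
      atTop (nhds 0) := by
  have hb := hG0.const_mul C
  rw [mul_zero] at hb
  refine squeeze_zero_norm (fun n => ?_) hb
  rcases (Finset.sum_nonneg fun j (_ : j ∈ Finset.univ) => sq_nonneg (G n j)).eq_or_lt with h | h
  · rw [← h]; simp
  · obtain ⟨ε, hε, hA⟩ := hAfin n
    have key := one_bound (ν n) (θstar n) (θγ n) (G n) C ε (hGdef n) (hmean0 n) (hcov n) hε hA
      (hm3 n) h
    set S := ∑ j, (G n j) ^ 2 with hS
    have hs : Real.sqrt S ^ 2 = S := Real.sq_sqrt h.le
    rw [Real.norm_eq_abs, abs_div, abs_of_pos h, div_le_iff₀ h]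
    have e : C * Real.sqrt S * S = C * Real.sqrt S ^ 3 := by
      nth_rewrite 2 [← hs]; ring
    rw [e]
    refine le_trans ?_ key
    have := abs_abs_sub_abs_le (cumulant (ν n) (θγ n) - cumulant (ν n) (θstar n)) (S / 2)
    rwa [abs_of_pos (half_pos h)] at this
end

section
/- Let (p_n) be positive integers with p_n → ∞ and p_n = o(n^{2/3}). For each n, let Y_1, …, Y_n be i.i.d. random vectors in ℝ^{p_n} with E[Y_1] = 0 and covariance matrix I_{p_n}, and suppose there are constants C, c > 0 independent of n with E[Y_{1j}^6] ≤ C for all coordinates j, sup_{‖a‖=1} |E[(aᵀY_1)³]| ≤ C and sup_{‖a‖=1} E[(aᵀY_1)⁴] ≤ C. Let γ_n ⊆ {1,…,p_n} with d_n := p_n − |γ_n| → ∞, and let G_n ∈ ℝ^{p_n} be vectors with c√(p_n/n) ≤ ‖G_n‖ ≤ C√(p_n/n); set δ_n = n‖G_n‖². Writing Ȳ = (1/n)Σ_{i=1}^n Y_i and Ȳ_{γ_n} for the vector equal to Ȳ on the coordinates in γ_n and 0 elsewhere, the standardized statistic ( n(‖Ȳ‖² − ‖Ȳ_{γ_n}‖²)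 + 2n G_nᵀȲ − d_n ) / √(2(d_n + 2δ_n)) converges in distribution to the standard normal distribution N(0,1) as n → ∞. -/
open MeasureTheory ProbabilityTheory Filter

lemma qs_exp_taylor (x : ℝ) :
    ‖Complex.exp (Complex.I * x) - (1 + Complex.I * x - (x : ℂ) ^ 2 / 2)‖ ≤ 4 * |x| ^ 3 := by
  rcases le_total |x| 1 with h | h
  · have h1 : ‖Complex.I * (x : ℂ)‖ ≤ 1 := by simpa using h
    have := Complex.exp_bound h1 (n := 3) (by norm_num)
    simp only [Finset.sum_range_succ, Finset.sum_range_zero] at this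
    have e : (Complex.I * (x : ℂ)) ^ 2 = -(x : ℂ) ^ 2 := by
      rw [mul_pow, Complex.I_sq]; ring
    have e2 : (0 + (Complex.I * (x : ℂ)) ^ 0 / ((Nat.factorial 0 : ℕ) : ℂ) + (Complex.I * (x : ℂ)) ^ 1 / ((Nat.factorial 1 : ℕ) : ℂ)
        + (Complex.I * (x : ℂ)) ^ 2 / ((Nat.factorial 2 : ℕ) : ℂ)) = (1 + Complex.I * x - (x : ℂ) ^ 2 / 2) := by
      rw [e]; simp; ring
    rw [e2] at this
    refine this.trans ?_
    have : ‖Complex.I * (x : ℂ)‖ = |x| := by simp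
    rw [this]
    have : (0:ℝ) ≤ |x| ^ 3 := by positivity
    norm_num [Nat.factorial]
    nlinarith
  · have h1 : ‖Complex.exp (Complex.I * x)‖ = 1 := by
      rw [mul_comm]; exact Complex.norm_exp_ofReal_mul_I x
    calc _ ≤ ‖Complex.exp (Complex.I * x)‖ + (‖(1 : ℂ)‖ + ‖Complex.I * (x : ℂ)‖ + ‖(x : ℂ) ^ 2 / 2‖) := by
            refine (norm_sub_le _ _).trans ?_
            gcongr
            refine (norm_sub_le _ _).trans ?_
            gcongr
            exact norm_add_le _ _
      _ = 1 + (1 + |x| + |x| ^ 2 / 2) := by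
            rw [h1]; simp
      _ ≤ 4 * |x| ^ 3 := by
            have h2 : |x| ≤ |x| ^ 2 := by nlinarith
            have h3 : |x| ^ 2 ≤ |x| ^ 3 := by nlinarith [sq_nonneg |x|]
            linarith

lemma qs_memLp_int_pow {Ω : Type*} [MeasurableSpace Ω] {P : Measure Ω} 
    {X : Ω → ℝ} (hX : MemLp X 4 P) : Integrable (fun ω => X ω ^ 4) P := by
  have := hX.integrable_norm_pow (p := 4) (by norm_num)
  simpa [Even.pow_abs (show Even 4 by decide)] using this

lemma qs_mul4 {Ω : Type*} [MeasurableSpace Ω] {P : Measure Ω}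
    {X Y : Ω → ℝ} (hX : MemLp X 4 P) (hY : MemLp Y 4 P) : MemLp (fun ω => X ω * Y ω) 2 P := by
  have : ENNReal.HolderTriple 4 4 2 := ⟨by
    have h : (4 : ENNReal)⁻¹ = 2⁻¹ * 2⁻¹ := by
      rw [← ENNReal.mul_inv (by norm_num) (by norm_num)]; norm_num
    rw [h, ← mul_add, ENNReal.inv_two_add_inv_two, mul_one]⟩
  exact hY.mul' hX

lemma qs_mul2 {Ω : Type*} [MeasurableSpace Ω] {P : Measure Ω}
    {X Y : Ω → ℝ} (hX : MemLp X 2 P) (hY : MemLp Y 2 P) : Integrable (fun ω => X ω * Y ω) P :=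
  hX.integrable_mul hY

/-- `(∫ |f|)` is at most `r` if `∫ f² ≤ r²`. -/
lemma qs_abs_le {Ω : Type*} [MeasurableSpace Ω] {P : Measure Ω} [IsProbabilityMeasure P]
    {X : Ω → ℝ} (hX : MemLp X 2 P) {r : ℝ} (hr : 0 ≤ r) (h : ∫ ω, X ω ^ 2 ∂P ≤ r ^ 2) :
    ∫ ω, |X ω| ∂P ≤ r := by
  have h1 : MemLp (fun ω => |X ω|) 2 P := hX.abs
  have := variance_nonneg (fun ω => |X ω|) P
  rw [variance_eq_sub h1] at this
  simp only [Pi.pow_apply, sq_abs] at this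
  exact abs_le_of_sq_le_sq' (by linarith) hr |>.2

lemma qs_char_fixed {Ω : Type*} [MeasurableSpace Ω] {P : Measure Ω} [IsProbabilityMeasure P]
    {X : Ω → ℝ} (hX : MemLp X 4 P) {q K ε : ℝ} (hε : 0 < ε)
    (h1 : ∫ ω, X ω ∂P = 0) (h2 : ∫ ω, X ω ^ 2 ∂P = q) (h4 : ∫ ω, X ω ^ 4 ∂P ≤ K * q ^ 2) :
    ‖∫ ω, Complex.exp (Complex.I * (X ω : ℂ)) ∂P - (1 - q / 2)‖ ≤
      2 * (ε * q + K * q ^ 2 / ε) := by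
  have hX2 : MemLp X 2 P := hX.mono_exponent (by norm_num)
  have i1 : Integrable X P := hX2.integrable (by norm_num)
  have i2 : Integrable (fun ω => X ω ^ 2) P := hX2.integrable_sq
  have i4 := qs_memLp_int_pow hX
  have ie : Integrable (fun ω => Complex.exp (Complex.I * (X ω : ℂ))) P := by
    refine Integrable.of_bound (C := 1) ?_ ?_
    · have : Continuous fun x : ℝ => Complex.exp (Complex.I * (x : ℂ)) := by fun_prop
      exact this.comp_aestronglyMeasurable hX.1
    · refine ae_of_all _ fun ω => ?_
      rw [mul_comm]; exact (Complex.norm_exp_ofReal_mul_I _).le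
  have ic1 : Integrable (fun ω => (1 + Complex.I * (X ω : ℂ) - (X ω : ℂ) ^ 2 / 2)) P := by
    have a : Integrable (fun ω => (X ω : ℂ)) P := i1.ofReal
    have b := i2.ofReal (𝕜 := ℂ)
    refine ((integrable_const _).add (a.const_mul _)).sub ?_
    simpa using b.div_const 2
  have e1 : ∫ ω, (1 + Complex.I * (X ω : ℂ) - (X ω : ℂ) ^ 2 / 2) ∂P = 1 - (q : ℂ) / 2 := by
    have a : Integrable (fun ω => (X ω : ℂ)) P := i1.ofReal
    have b := i2.ofReal (𝕜 := ℂ)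
    have b' : Integrable (fun ω => (X ω : ℂ) ^ 2 / 2) P := by simpa using b.div_const 2
    have a' : Integrable (fun ω => 1 + Complex.I * (X ω : ℂ)) P :=
      (integrable_const _).add (a.const_mul _)
    rw [integral_sub a' b',
      integral_add (integrable_const _) (a.const_mul _), integral_const_mul, integral_div]
    have : ∫ ω, (X ω : ℂ) ∂P = 0 := by
      rw [integral_complex_ofReal, h1]; simp
    have h2' : ∫ ω, (X ω : ℂ) ^ 2 ∂P = q := by
      rw [← h2, ← integral_complex_ofReal]; simp
    rw [h2']
    simp [this]
  rw [← e1, ← integral_sub ie ic1]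
  refine (norm_integral_le_integral_norm _).trans ?_
  calc _ ≤ ∫ ω, 2 * (ε * X ω ^ 2 + X ω ^ 4 / ε) ∂P := by
        refine integral_mono (ie.sub ic1).norm
          (((i2.const_mul ε).add (i4.div_const ε)).const_mul 2) fun ω => ?_
        refine (qs_exp_taylor _).trans ?_
        have : ε * X ω ^ 2 + X ω ^ 4 / ε - 2 * |X ω| ^ 3 = (ε * |X ω| - |X ω| ^ 2) ^ 2 / ε := by
          rw [show X ω ^ 2 = |X ω| ^ 2 by simp, show X ω ^ 4 = |X ω| ^ 4 from (Even.pow_abs (by decide) _).symm]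
          field_simp
          ring
        have h0 : 0 ≤ (ε * |X ω| - |X ω| ^ 2) ^ 2 / ε := by positivity
        show 4 * |X ω| ^ 3 ≤ 2 * (ε * X ω ^ 2 + X ω ^ 4 / ε)
        linarith
    _ = 2 * (ε * q + (∫ ω, X ω ^ 4 ∂P) / ε) := by
        rw [integral_const_mul, integral_add (i2.const_mul ε) (i4.div_const ε),
          integral_const_mul, integral_div, h2]
    _ ≤ _ := by gcongr

/-- Standardised random vector. -/
structure QsStd {Ω ι : Type*} [Fintype ι] [DecidableEq ι] [MeasurableSpace Ω] (P : Measure Ω)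
    (Y : Ω → ι → ℝ) (C : ℝ) : Prop where
  meas : Measurable Y
  memLp : ∀ j, MemLp (fun ω => Y ω j) 4 P
  mean : ∀ j, ∫ ω, Y ω j ∂P = 0
  cov : ∀ j l, ∫ ω, Y ω j * Y ω l ∂P = if j = l then (1 : ℝ) else 0
  m4 : ∀ a : ι → ℝ, ∫ ω, (∑ j, a j * Y ω j) ^ 4 ∂P ≤ C * (∑ j, a j ^ 2) ^ 2

section std
set_option linter.unusedSectionVars false
variable {Ω ι : Type*} [Fintype ι] [DecidableEq ι] [MeasurableSpace Ω] {P : Measure Ω}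
  [IsProbabilityMeasure P] {Y : Ω → ι → ℝ} {C : ℝ}

lemma QsStd.lin_memLp (h : QsStd P Y C) (a : ι → ℝ) :
    MemLp (fun ω => ∑ j, a j * Y ω j) 4 P :=
  memLp_finsetSum _ fun j _ => (h.memLp j).const_mul _

lemma QsStd.memLp2 (h : QsStd P Y C) (j : ι) : MemLp (fun ω => Y ω j) 2 P :=
  (h.memLp j).mono_exponent (by norm_num)

lemma QsStd.int (h : QsStd P Y C) (j : ι) : Integrable (fun ω => Y ω j) P :=
  (h.memLp2 j).integrable (by norm_num)

lemma QsStd.lin_mean (h : QsStd P Y C) (a : ι → ℝ) :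
    ∫ ω, ∑ j, a j * Y ω j ∂P = 0 := by
  rw [integral_finsetSum _ fun j _ => (h.int j).const_mul _]
  simp [integral_const_mul, h.mean]

lemma QsStd.lin_sq (h : QsStd P Y C) (a : ι → ℝ) :
    ∫ ω, (∑ j, a j * Y ω j) ^ 2 ∂P = ∑ j, a j ^ 2 := by
  have : ∀ ω, (∑ j, a j * Y ω j) ^ 2 = ∑ j, ∑ l, (a j * a l) * (Y ω j * Y ω l) := by
    intro ω
    rw [sq, Finset.sum_mul_sum]
    exact Finset.sum_congr rfl fun j _ => Finset.sum_congr rfl fun l _ => by ring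
  have hi : ∀ j l, Integrable (fun ω => (a j * a l) * (Y ω j * Y ω l)) P := fun j l =>
    (qs_mul2 (h.memLp2 j) (h.memLp2 l)).const_mul _
  simp_rw [this]
  rw [integral_finsetSum _ fun j _ => integrable_finsetSum _ fun l _ => hi j l]
  refine Finset.sum_congr rfl fun j _ => ?_
  rw [integral_finsetSum _ fun l _ => hi j l]
  simp [integral_const_mul, h.cov, sq]

lemma QsStd.m4_coord (h : QsStd P Y C) (j : ι) : ∫ ω, Y ω j ^ 4 ∂P ≤ C := by
  have := h.m4 (fun l => if l = j then 1 else 0)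
  simpa using this

/-- One step of the characteristic function recursion. -/
lemma QsStd.step (h : QsStd P Y C) {M : Ω → ℝ} {v : Ω → ι → ℝ}
    (hM : Measurable M) (hv : Measurable v) (hind : IndepFun (fun ω => (M ω, v ω)) Y P)
    {w r ε : ℝ} (hC : 0 ≤ C) (hw : 0 ≤ w) (hr : 0 ≤ r) (hε : 0 < ε)
    (hq : MemLp (fun ω => ∑ j, v ω j ^ 2 - w) 2 P)
    (hD : ∫ ω, (∑ j, v ω j ^ 2 - w) ^ 2 ∂P ≤ r ^ 2) :
    ‖∫ ω, Complex.exp (Complex.I * ((M ω + ∑ j, v ω j * Y ω j : ℝ) : ℂ)) ∂P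
      - Complex.exp (((-(w / 2) : ℝ)) : ℂ) * ∫ ω, Complex.exp (Complex.I * (M ω : ℂ)) ∂P‖ ≤
      (1 / 2 + 2 * ε) * r + 2 * ε * w + 2 * C / ε * (2 * w ^ 2 + 2 * r ^ 2) + w ^ 2 := by
  set φ : (ι → ℝ) → ℂ := fun a => ∫ ω, Complex.exp (Complex.I * ((∑ j, a j * Y ω j : ℝ) : ℂ)) ∂P
    with hφ
  have hφm : StronglyMeasurable φ := by
    have : StronglyMeasurable (Function.uncurry fun (a : ι → ℝ) (ω : Ω) =>
        Complex.exp (Complex.I * ((∑ j, a j * Y ω j : ℝ) : ℂ))) := by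
      apply Measurable.stronglyMeasurable
      have := h.meas
      unfold Function.uncurry
      fun_prop
    exact this.integral_prod_right
  have hunit : ∀ x : ℝ, ‖Complex.exp (Complex.I * (x : ℂ))‖ = 1 := fun x => by
    rw [mul_comm]; exact Complex.norm_exp_ofReal_mul_I _
  have hbd : ∀ f : Ω → ℝ, Measurable f → Integrable (fun ω => Complex.exp (Complex.I * (f ω : ℂ))) P := by
    intro f hf
    refine Integrable.of_bound (C := 1) ?_ (ae_of_all _ fun ω => (hunit _).le)
    exact (by fun_prop : Measurable fun ω => Complex.exp (Complex.I * (f ω : ℂ))).aestronglyMeasurable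
  -- Fubini
  have hfub : ∫ ω, Complex.exp (Complex.I * ((M ω + ∑ j, v ω j * Y ω j : ℝ) : ℂ)) ∂P
      = ∫ ω, Complex.exp (Complex.I * (M ω : ℂ)) * φ (v ω) ∂P := by
    have hmap := (indepFun_iff_map_prod_eq_prod_map_map (hM.prodMk hv).aemeasurable
      h.meas.aemeasurable).1 hind
    have : IsProbabilityMeasure (P.map (fun ω => (M ω, v ω))) :=
      Measure.isProbabilityMeasure_map (hM.prodMk hv).aemeasurable
    have : IsProbabilityMeasure (P.map Y) := Measure.isProbabilityMeasure_map h.meas.aemeasurable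
    let F : (ℝ × (ι → ℝ)) × (ι → ℝ) → ℂ := fun z =>
      Complex.exp (Complex.I * ((z.1.1 + ∑ j, z.1.2 j * z.2 j : ℝ) : ℂ))
    have hF : Measurable F := by fun_prop
    have e1 : ∫ ω, Complex.exp (Complex.I * ((M ω + ∑ j, v ω j * Y ω j : ℝ) : ℂ)) ∂P
        = ∫ z, F z ∂(P.map (fun ω => ((M ω, v ω), Y ω))) := by
      rw [integral_map ((hM.prodMk hv).prodMk h.meas).aemeasurable hF.aestronglyMeasurable]
    rw [e1, hmap, integral_prod]
    · rw [integral_map (hM.prodMk hv).aemeasurable]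
      · refine integral_congr_ae (ae_of_all _ fun ω => ?_)
        simp only [F, φ]
        rw [integral_map h.meas.aemeasurable]
        · rw [← integral_const_mul]
          refine integral_congr_ae (ae_of_all _ fun ω' => ?_)
          simp only
          rw [← Complex.exp_add]
          push_cast; ring_nf
        · exact (by fun_prop : Measurable fun y : ι → ℝ => Complex.exp (Complex.I * ((M ω + ∑ j, v ω j * y j : ℝ) : ℂ))).aestronglyMeasurable
      · exact (hF.stronglyMeasurable.integral_prod_right).aestronglyMeasurable
    · exact Integrable.of_bound (C := 1) hF.aestronglyMeasurable (ae_of_all _ fun z => (hunit _).le)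
  have hφ1 : ∀ a, ‖φ a‖ ≤ 1 := fun a => by
    refine (norm_integral_le_of_norm_le_const (C := 1) (ae_of_all _ fun ω => (hunit _).le)).trans ?_
    simp
  have i1 : Integrable (fun ω => Complex.exp (Complex.I * (M ω : ℂ)) * φ (v ω)) P := by
    refine Integrable.of_bound (C := 1) ?_ (ae_of_all _ fun ω => ?_)
    · exact (hbd M hM).1.mul (hφm.comp_measurable hv).aestronglyMeasurable
    · rw [norm_mul, hunit, one_mul]; exact hφ1 _
  rw [hfub, ← integral_const_mul, ← integral_sub i1 ((hbd M hM).const_mul _)]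
  have iabs : Integrable (fun ω => |∑ j, v ω j ^ 2 - w|) P := (hq.integrable (by norm_num)).abs
  have isq : Integrable (fun ω => (∑ j, v ω j ^ 2 - w) ^ 2) P := hq.integrable_sq
  have hpt : ∀ ω, ‖Complex.exp (Complex.I * (M ω : ℂ)) * φ (v ω)
      - Complex.exp (((-(w / 2) : ℝ)) : ℂ) * Complex.exp (Complex.I * (M ω : ℂ))‖ ≤
      (1 / 2 + 2 * ε) * |∑ j, v ω j ^ 2 - w| + (4 * C / ε * (∑ j, v ω j ^ 2 - w) ^ 2 +
        (2 * ε * w + 4 * C / ε * w ^ 2 + w ^ 2)) := by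
    intro ω
    have e : Complex.exp (Complex.I * (M ω : ℂ)) * φ (v ω)
      - Complex.exp (((-(w / 2) : ℝ)) : ℂ) * Complex.exp (Complex.I * (M ω : ℂ)) =
      Complex.exp (Complex.I * (M ω : ℂ)) * ((φ (v ω) - (1 - (∑ j, v ω j ^ 2 : ℝ) / 2)) -
        ((((∑ j, v ω j ^ 2 - w) / 2 : ℝ) : ℂ) + ((Real.exp (-(w / 2)) - (1 - w / 2) : ℝ) : ℂ))) := by
      push_cast; ring
    rw [e, norm_mul, hunit, one_mul]
    have b1 := qs_char_fixed (h.lin_memLp (v ω)) hε (h.lin_mean (v ω)) (h.lin_sq (v ω)) (h.m4 (v ω))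
    set q := ∑ j, v ω j ^ 2 with hqdef
    have b2 : |Real.exp (-(w / 2)) - (1 - w / 2)| ≤ w ^ 2 := by
      rw [abs_le]
      have l := Real.add_one_le_exp (-(w / 2))
      have u := Real.add_one_le_exp (w / 2)
      have pr : Real.exp (-(w / 2)) * Real.exp (w / 2) = 1 := by rw [← Real.exp_add]; simp
      have p1 := Real.exp_pos (-(w / 2))
      constructor
      · nlinarith
      · have : Real.exp (-(w / 2)) * (1 + w / 2) ≤ 1 := by nlinarith
        have : Real.exp (-(w/2)) ≤ 1 := by nlinarith
        nlinarith [sq_nonneg w]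
    have b3 : ε * q ≤ ε * w + ε * |q - w| := by
      have := le_abs_self (q - w)
      nlinarith
    have b4 : C * q ^ 2 / ε ≤ C / ε * (2 * w ^ 2 + 2 * (q - w) ^ 2) := by
      rw [mul_div_right_comm]
      gcongr
      nlinarith [sq_nonneg (q - w - w)]
    calc _ ≤ ‖φ (v ω) - (1 - (q : ℂ) / 2)‖ +
          (‖(((q - w) / 2 : ℝ) : ℂ)‖ + ‖((Real.exp (-(w / 2)) - (1 - w / 2) : ℝ) : ℂ)‖) := by
            refine (norm_sub_le _ _).trans ?_
            gcongr
            exact norm_add_le _ _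
      _ ≤ 2 * (ε * q + C * q ^ 2 / ε) + (|q - w| / 2 + w ^ 2) := by
            rw [Complex.norm_real, Complex.norm_real, Real.norm_eq_abs, Real.norm_eq_abs, abs_div,
              abs_two]
            gcongr
      _ ≤ _ := by
            have : C / ε * (2 * w ^ 2 + 2 * (q - w) ^ 2) = 2 * C / ε * w ^ 2 + 2 * C / ε * (q - w) ^ 2 := by ring
            have : 4 * C / ε * (q - w) ^ 2 = 2 * (2 * C / ε * (q - w) ^ 2) := by ring
            have : 4 * C / ε * w ^ 2 = 2 * (2 * C / ε * w ^ 2) := by ring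
            linarith
  refine (norm_integral_le_integral_norm _).trans ?_
  have i3 : Integrable (fun ω => 4 * C / ε * (∑ j, v ω j ^ 2 - w) ^ 2 +
        (2 * ε * w + 4 * C / ε * w ^ 2 + w ^ 2)) P := (isq.const_mul _).add (integrable_const _)
  have i4 : Integrable (fun ω => (1 / 2 + 2 * ε) * |∑ j, v ω j ^ 2 - w| +
      (4 * C / ε * (∑ j, v ω j ^ 2 - w) ^ 2 +
        (2 * ε * w + 4 * C / ε * w ^ 2 + w ^ 2))) P := (iabs.const_mul _).add i3
  refine (integral_mono (i1.sub ((hbd M hM).const_mul _)).norm i4 hpt).trans ?_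
  rw [integral_add (iabs.const_mul _) i3,
    integral_add (isq.const_mul _) (integrable_const _), integral_const_mul, integral_const_mul,
    integral_const]
  have := qs_abs_le hq hr hD
  have t1 : (1 / 2 + 2 * ε) * ∫ ω, |∑ j, v ω j ^ 2 - w| ∂P ≤ (1 / 2 + 2 * ε) * r := by gcongr
  have t2 : 4 * C / ε * ∫ ω, (∑ j, v ω j ^ 2 - w) ^ 2 ∂P ≤ 4 * C / ε * r ^ 2 := by gcongr
  simp only [probReal_univ, smul_eq_mul, one_mul]
  have : 2 * C / ε * (2 * w ^ 2 + 2 * r ^ 2) = 4 * C / ε * w ^ 2 + 4 * C / ε * r ^ 2 := by ring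
  linarith

end std

section sums
set_option linter.unusedSectionVars false
variable {Ω ι κ : Type*} [Fintype ι] [DecidableEq ι] [DecidableEq κ] [MeasurableSpace Ω]
  {P : Measure Ω} [IsProbabilityMeasure P] {Y : κ → Ω → ι → ℝ} {C : ℝ}

/-- second moment of a sum of independent centred variables -/
lemma qs_sum_sq {X : κ → Ω → ℝ} (hX : ∀ i, MemLp (X i) 2 P) (hm : ∀ i, ∫ ω, X i ω ∂P = 0)
    (hind : iIndepFun X P) (s : Finset κ) :
    ∫ ω, (∑ i ∈ s, X i ω) ^ 2 ∂P = ∑ i ∈ s, ∫ ω, X i ω ^ 2 ∂P := by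
  have h := IndepFun.variance_sum (X := X) (s := s) (fun i _ => hX i)
    (fun i _ j _ hij => hind.indepFun hij)
  have hi : ∀ i ∈ s, Integrable (X i) P := fun i _ => (hX i).integrable (by norm_num)
  have hs : MemLp (∑ i ∈ s, X i) 2 P := memLp_finsetSum' _ fun i _ => hX i
  rw [variance_of_integral_eq_zero hs.1.aemeasurable] at h
  · simp only [Finset.sum_apply] at h
    rw [h]
    exact Finset.sum_congr rfl fun i _ => variance_of_integral_eq_zero (hX i).1.aemeasurable (hm i)
  · simp only [Finset.sum_apply]
    rw [integral_finsetSum _ hi]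
    simp [hm]

/-- partial sums -/
def qsS (Y : κ → Ω → ι → ℝ) (s : Finset κ) (ω : Ω) (j : ι) : ℝ := ∑ i ∈ s, Y i ω j

/-- squared length (weighted) of one observation -/
def qsT (α : ι → ℝ) (y : ι → ℝ) : ℝ := ∑ j, α j * y j ^ 2

lemma qs_meas_T (α : ι → ℝ) : Measurable (qsT α) := by unfold qsT; fun_prop

lemma qsS_insert {s : Finset κ} {i : κ} (hi : i ∉ s) (ω : Ω) (j : ι) :
    qsS Y (insert i s) ω j = qsS Y s ω j + Y i ω j := by
  simp [qsS, Finset.sum_insert hi, add_comm]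

lemma qs_indep (hY : ∀ i, Measurable (Y i)) (hind : iIndepFun Y P) (α : ι → ℝ)
    {s : Finset κ} {i : κ} (hi : i ∉ s) :
    IndepFun (fun ω => (qsS Y s ω, ∑ k ∈ s, qsT α (Y k ω))) (Y i) P := by
  have hm : Measurable (fun y : ι → ℝ => (y, qsT α y)) := measurable_id.prodMk (qs_meas_T α)
  have h1 : iIndepFun (fun k ω => (Y k ω, qsT α (Y k ω))) P :=
    hind.comp (fun _ y => (y, qsT α y)) fun _ => hm
  have h2 := h1.indepFun_finsetSum_of_notMem (fun k => hm.comp (hY k)) hi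
  have h3 := h2.comp measurable_id measurable_fst
  have e : (fun ω => (qsS Y s ω, ∑ k ∈ s, qsT α (Y k ω))) =
      id ∘ ∑ k ∈ s, fun ω => (Y k ω, qsT α (Y k ω)) := by
    ext ω
    · simp [qsS, Prod.fst_sum]
    · simp [Prod.snd_sum]
  rw [e]
  exact h3


lemma qsS_memLp (h : ∀ i, QsStd P (Y i) C)
    (s : Finset κ) (j : ι) : MemLp (fun ω => qsS Y s ω j) 4 P :=
  memLp_finsetSum _ fun i _ => (h i).memLp j

lemma qsS_meas (h : ∀ i, QsStd P (Y i) C)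
    (s : Finset κ) : Measurable (qsS Y s) := by
  refine measurable_pi_lambda _ fun j => ?_
  refine Finset.measurable_fun_sum _ fun i _ => ?_
  exact (measurable_pi_apply j).comp (h i).meas

lemma qsS_lin_sq (h : ∀ i, QsStd P (Y i) C)
    (hind : iIndepFun Y P) (s : Finset κ) (b : ι → ℝ) :
    ∫ ω, (∑ j, b j * qsS Y s ω j) ^ 2 ∂P = s.card * ∑ j, b j ^ 2 := by
  have e : ∀ ω, ∑ j, b j * qsS Y s ω j = ∑ i ∈ s, ∑ j, b j * Y i ω j := by
    intro ω
    simp only [qsS, Finset.mul_sum]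
    exact Finset.sum_comm
  simp_rw [e]
  rw [qs_sum_sq (X := fun i ω => ∑ j, b j * Y i ω j)
    (fun i => ((h i).lin_memLp b).mono_exponent (by norm_num)) (fun i => (h i).lin_mean b)
    (hind.comp (fun _ y => ∑ j, b j * y j) fun _ => by fun_prop)]
  simp [(h _).lin_sq]

lemma qsS_coord_sq (h : ∀ i, QsStd P (Y i) C)
    (hind : iIndepFun Y P) (s : Finset κ) (j : ι) :
    ∫ ω, qsS Y s ω j ^ 2 ∂P = s.card := by
  have := qsS_lin_sq h hind s (fun l => if l = j then 1 else 0)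
  simpa using this


lemma qsH_memLp (h : ∀ i, QsStd P (Y i) C) {α : ι → ℝ} (hα : ∀ j, α j * α j = α j)
    (i : κ) : MemLp (fun ω => qsT α (Y i ω) - ∑ j, α j) 2 P := by
  refine MemLp.sub ?_ (memLp_const _)
  refine memLp_finsetSum _ fun j _ => MemLp.const_mul ?_ _
  simpa [sq] using qs_mul4 ((h i).memLp j) ((h i).memLp j)

lemma qsH_mean (h : ∀ i, QsStd P (Y i) C) {α : ι → ℝ} (hα : ∀ j, α j * α j = α j)
    (i : κ) : ∫ ω, (qsT α (Y i ω) - ∑ j, α j) ∂P = 0 := by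
  have hi : ∀ j, Integrable (fun ω => α j * Y i ω j ^ 2) P := fun j =>
    ((h i).memLp2 j).integrable_sq.const_mul _
  have e : ∫ ω, qsT α (Y i ω) ∂P = ∑ j, α j := by
    unfold qsT
    rw [integral_finsetSum _ fun j _ => hi j]
    refine Finset.sum_congr rfl fun j _ => ?_
    have := (h i).cov j j
    simp only [if_true, ← sq] at this
    rw [integral_const_mul, this, mul_one]
  have hi' : Integrable (fun ω => qsT α (Y i ω)) P := integrable_finsetSum _ fun j _ => hi j
  rw [integral_sub hi' (integrable_const _), e]
  simp

lemma qs_alpha_nonneg (h : ∀ i, QsStd P (Y i) C) {α : ι → ℝ} (hα : ∀ j, α j * α j = α j)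
    (j : ι) : 0 ≤ α j := by rw [← hα j]; exact mul_self_nonneg _

lemma qsH_sq (h : ∀ i, QsStd P (Y i) C) {α : ι → ℝ} (hα : ∀ j, α j * α j = α j)
    (i : κ) : ∫ ω, (qsT α (Y i ω) - ∑ j, α j) ^ 2 ∂P ≤ (C + 1) * (∑ j, α j) ^ 2 := by
  set d := ∑ j, α j with hd
  have hα0 : ∀ j, 0 ≤ α j := fun j => by rw [← hα j]; exact mul_self_nonneg _
  have hd0 : 0 ≤ d := Finset.sum_nonneg fun j _ => hα0 j
  have i4 : ∀ j, Integrable (fun ω => α j * Y i ω j ^ 4) P := fun j =>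
    (qs_memLp_int_pow ((h i).memLp j)).const_mul _
  have i5 : Integrable (fun ω => ∑ j, α j * Y i ω j ^ 4) P := integrable_finsetSum _ fun j _ => i4 j
  have i6 : Integrable (fun ω => d * ∑ j, α j * Y i ω j ^ 4 + d ^ 2) P :=
    (i5.const_mul d).add (integrable_const _)
  have hpt : ∀ ω, (qsT α (Y i ω) - d) ^ 2 ≤ d * ∑ j, α j * Y i ω j ^ 4 + d ^ 2 := by
    intro ω
    have hT : 0 ≤ qsT α (Y i ω) := Finset.sum_nonneg fun j _ => mul_nonneg (hα0 j) (sq_nonneg _)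
    have cs := Finset.sum_mul_sq_le_sq_mul_sq Finset.univ α (fun j => α j * Y i ω j ^ 2)
    have e1 : ∑ j, α j * (α j * Y i ω j ^ 2) = qsT α (Y i ω) :=
      Finset.sum_congr rfl fun j _ => by rw [← mul_assoc, hα]
    have e2 : ∑ j, α j ^ 2 = d := Finset.sum_congr rfl fun j _ => by rw [sq, hα]
    have e3 : ∑ j, (α j * Y i ω j ^ 2) ^ 2 = ∑ j, α j * Y i ω j ^ 4 :=
      Finset.sum_congr rfl fun j _ => by rw [mul_pow, sq (α j), hα]; ring
    rw [e1, e2, e3] at cs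
    nlinarith
  refine (integral_mono (qsH_memLp h hα i).integrable_sq i6 hpt).trans ?_
  rw [integral_add (i5.const_mul d) (integrable_const _), integral_const_mul,
    integral_finsetSum _ fun j _ => i4 j]
  have : ∑ j, ∫ ω, α j * Y i ω j ^ 4 ∂P ≤ C * d := by
    rw [hd, Finset.mul_sum]
    refine Finset.sum_le_sum fun j _ => ?_
    rw [integral_const_mul, mul_comm]
    exact mul_le_mul_of_nonneg_right ((h i).m4_coord j) (hα0 j)
  simp only [integral_const, probReal_univ, smul_eq_mul, one_mul]
  nlinarith

lemma qsR_sq (h : ∀ i, QsStd P (Y i) C) {α : ι → ℝ} (hα : ∀ j, α j * α j = α j)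
    (hind : iIndepFun Y P) (s : Finset κ) :
    ∫ ω, (∑ i ∈ s, (qsT α (Y i ω) - ∑ j, α j)) ^ 2 ∂P ≤ s.card * ((C + 1) * (∑ j, α j) ^ 2) := by
  rw [qs_sum_sq (X := fun i ω => qsT α (Y i ω) - ∑ j, α j) (fun i => qsH_memLp h hα i)
    (fun i => qsH_mean h hα i)
    (hind.comp (fun _ y => qsT α y - ∑ j, α j) fun _ => (qs_meas_T α).sub_const _)]
  rw [← nsmul_eq_mul]
  exact Finset.sum_le_card_nsmul _ _ _ fun i _ => qsH_sq h hα i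

lemma qsQ_memLp (h : ∀ i, QsStd P (Y i) C) {α : ι → ℝ} (hα : ∀ j, α j * α j = α j)
    (s : Finset κ) : MemLp (fun ω => qsT α (qsS Y s ω) - s.card * ∑ j, α j) 2 P := by
  refine MemLp.sub ?_ (memLp_const _)
  refine memLp_finsetSum _ fun j _ => MemLp.const_mul ?_ _
  simpa [sq] using qs_mul4 (qsS_memLp h s j) (qsS_memLp h s j)

lemma qsQ_sq (h : ∀ i, QsStd P (Y i) C) {α : ι → ℝ} (hα : ∀ j, α j * α j = α j)
    (hind : iIndepFun Y P) (s : Finset κ) :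
    ∫ ω, (qsT α (qsS Y s ω) - s.card * ∑ j, α j) ^ 2 ∂P ≤
      8 * s.card ^ 2 * (∑ j, α j) + 2 * (C + 1) * s.card * (∑ j, α j) ^ 2 := by
  set d := ∑ j, α j with hd
  have hα0 : ∀ j, 0 ≤ α j := fun j => by rw [← hα j]; exact mul_self_nonneg _
  have hd0 : 0 ≤ d := Finset.sum_nonneg fun j _ => hα0 j
  induction s using Finset.induction_on with
  | empty => simp [qsT, qsS]
  | insert i s hi ih =>
    set Q : Ω → ℝ := fun ω => qsT α (qsS Y s ω) - s.card * d with hQ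
    set H : Ω → ℝ := fun ω => qsT α (Y i ω) - d with hH
    set U : Ω → ℝ := fun ω => ∑ j, α j * (qsS Y s ω j * Y i ω j) with hU
    have mQ : MemLp Q 2 P := qsQ_memLp h hα s
    have mH : MemLp H 2 P := qsH_memLp h hα i
    have mSY : ∀ j, MemLp (fun ω => qsS Y s ω j * Y i ω j) 2 P := fun j =>
      qs_mul4 (qsS_memLp h s j) ((h i).memLp j)
    have mU : MemLp U 2 P := memLp_finsetSum _ fun j _ => (mSY j).const_mul _
    have hI : IndepFun (qsS Y s) (Y i) P :=
      (qs_indep (fun i => (h i).meas) hind α hi).comp measurable_fst measurable_id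
    have hQm : Measurable fun x : ι → ℝ => qsT α x - s.card * d := (qs_meas_T α).sub_const _
    have hHm : Measurable fun x : ι → ℝ => qsT α x - d := (qs_meas_T α).sub_const _
    have hQH : ∫ ω, Q ω * H ω ∂P = 0 := by
      have := (hI.comp hQm hHm).integral_fun_mul_eq_mul_integral mQ.1 mH.1
      refine this.trans ?_
      have h0 : ∫ ω, H ω ∂P = 0 := qsH_mean h hα i
      exact mul_eq_zero_of_right _ h0
    have hQU : ∫ ω, Q ω * U ω ∂P = 0 := by
      have e : ∀ ω, Q ω * U ω = ∑ j, α j * (Q ω * (qsS Y s ω j * Y i ω j)) := by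
        intro ω
        simp only [hU, Finset.mul_sum]
        exact Finset.sum_congr rfl fun j _ => by ring
      simp_rw [e]
      rw [integral_finsetSum _ fun j _ => (qs_mul2 mQ (mSY j)).const_mul _]
      refine Finset.sum_eq_zero fun j _ => ?_
      have hm1 : Measurable fun x : ι → ℝ => (qsT α x - s.card * d) * x j :=
        hQm.mul (measurable_pi_apply j)
      have := (hI.comp hm1 (measurable_pi_apply j)).integral_fun_mul_eq_mul_integral
        (hm1.comp (qsS_meas h s)).aestronglyMeasurable
        ((measurable_pi_apply j).comp (h i).meas).aestronglyMeasurable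
      rw [integral_const_mul]
      refine mul_eq_zero_of_right _ ?_
      have e2 : ∫ ω, Q ω * (qsS Y s ω j * Y i ω j) ∂P = ∫ ω, (Q ω * qsS Y s ω j) * Y i ω j ∂P := by
        simp only [mul_assoc]
      rw [e2]
      refine this.trans ?_
      exact mul_eq_zero_of_right _ ((h i).mean j)
    have hUU : ∫ ω, U ω ^ 2 ∂P = s.card * d := by
      have mSS : ∀ j l, Integrable (fun ω => (qsS Y s ω j * Y i ω j) * (qsS Y s ω l * Y i ω l)) P :=
        fun j l => qs_mul2 (mSY j) (mSY l)
      have e : ∀ ω, U ω ^ 2 = ∑ j, ∑ l, (α j * α l) *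
          ((qsS Y s ω j * Y i ω j) * (qsS Y s ω l * Y i ω l)) := by
        intro ω
        rw [sq, hU, Finset.sum_mul_sum]
        exact Finset.sum_congr rfl fun j _ => Finset.sum_congr rfl fun l _ => by ring
      have e2 : ∀ j l, ∫ ω, (qsS Y s ω j * Y i ω j) * (qsS Y s ω l * Y i ω l) ∂P =
          if j = l then (s.card : ℝ) else 0 := by
        intro j l
        have hm : Measurable fun x : ι → ℝ => x j * x l := by fun_prop
        have := (hI.comp hm hm).integral_fun_mul_eq_mul_integral
          (hm.comp (qsS_meas h s)).aestronglyMeasurable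
          (hm.comp (h i).meas).aestronglyMeasurable
        have e3 : ∫ ω, (qsS Y s ω j * Y i ω j) * (qsS Y s ω l * Y i ω l) ∂P =
          ∫ ω, (qsS Y s ω j * qsS Y s ω l) * (Y i ω j * Y i ω l) ∂P :=
          integral_congr_ae (ae_of_all _ fun ω => by ring)
        rw [e3]
        refine this.trans ?_
        have e4 : ∫ ω, ((fun x : ι → ℝ => x j * x l) ∘ Y i) ω ∂P = if j = l then 1 else 0 :=
          (h i).cov j l
        rw [e4]
        split_ifs with hjl
        · subst hjl
          have := qsS_coord_sq h hind s j
          simp only [Function.comp_def, ← sq, this, mul_one]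
        · simp
      simp_rw [e]
      rw [integral_finsetSum _ fun j _ => integrable_finsetSum _ fun l _ => (mSS j l).const_mul _,
        hd, Finset.mul_sum]
      refine Finset.sum_congr rfl fun j _ => ?_
      rw [integral_finsetSum _ fun l _ => (mSS j l).const_mul _]
      simp only [integral_const_mul, e2]
      simp [hα, mul_comm]
    have hHH : ∫ ω, H ω ^ 2 ∂P ≤ (C + 1) * d ^ 2 := qsH_sq h hα i
    have iQ := mQ.integrable_sq
    have iH := mH.integrable_sq
    have iU := mU.integrable_sq
    have iQU := qs_mul2 mQ mU
    have iQH := qs_mul2 mQ mH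
    have hcard : ((insert i s).card : ℝ) = s.card + 1 := by
      rw [Finset.card_insert_of_notMem hi]; push_cast; ring
    have hnew : ∀ ω, qsT α (qsS Y (insert i s) ω) - (insert i s).card * d = Q ω + 2 * U ω + H ω := by
      intro ω
      rw [hcard]
      simp only [hQ, hU, hH, qsT, qsS_insert hi, Finset.mul_sum]
      have : ∑ j, α j * (qsS Y s ω j + Y i ω j) ^ 2 = ∑ j, α j * qsS Y s ω j ^ 2 +
          ∑ j, 2 * (α j * (qsS Y s ω j * Y i ω j)) + ∑ j, α j * Y i ω j ^ 2 := by
        rw [← Finset.sum_add_distrib, ← Finset.sum_add_distrib]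
        exact Finset.sum_congr rfl fun j _ => by ring
      rw [this]; ring
    have iA : Integrable (fun ω => Q ω ^ 2 + 8 * U ω ^ 2) P := iQ.add (iU.const_mul 8)
    have iB : Integrable (fun ω => Q ω ^ 2 + 8 * U ω ^ 2 + 2 * H ω ^ 2) P := iA.add (iH.const_mul 2)
    have iC : Integrable (fun ω => 4 * (Q ω * U ω) + 2 * (Q ω * H ω)) P :=
      (iQU.const_mul 4).add (iQH.const_mul 2)
    have mN : MemLp (fun ω => Q ω + 2 * U ω + H ω) 2 P := (mQ.add (mU.const_mul 2)).add mH
    calc _ = ∫ ω, (Q ω + 2 * U ω + H ω) ^ 2 ∂P := by simp_rw [hnew]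
      _ ≤ ∫ ω, ((Q ω ^ 2 + 8 * U ω ^ 2 + 2 * H ω ^ 2) + (4 * (Q ω * U ω) + 2 * (Q ω * H ω))) ∂P := by
          refine integral_mono mN.integrable_sq (iB.add iC) fun ω => ?_
          show (Q ω + 2 * U ω + H ω) ^ 2 ≤ _
          nlinarith [sq_nonneg (2 * U ω - H ω)]
      _ = (∫ ω, Q ω ^ 2 ∂P) + 8 * (s.card * d) + 2 * ∫ ω, H ω ^ 2 ∂P := by
          rw [integral_add iB iC, integral_add iA (iH.const_mul 2), integral_add iQ (iU.const_mul 8),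
            integral_add (iQU.const_mul 4) (iQH.const_mul 2), integral_const_mul, integral_const_mul,
            integral_const_mul, integral_const_mul, hQU, hQH, hUU]
          ring
      _ ≤ _ := by
          rw [hcard]
          have hs0 : (0 : ℝ) ≤ s.card := Nat.cast_nonneg _
          have : 0 ≤ s.card * d := mul_nonneg hs0 hd0
          nlinarith

end sums

section single
set_option linter.unusedSectionVars false
variable {Ω ι κ : Type*} [Fintype ι] [DecidableEq ι] [DecidableEq κ] [MeasurableSpace Ω]
  {P : Measure Ω} [IsProbabilityMeasure P] {Y : κ → Ω → ι → ℝ} {C : ℝ}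

/-- the martingale part -/
noncomputable def qsM (Y : κ → Ω → ι → ℝ) (α G : ι → ℝ) (N τ : ℝ) (s : Finset κ) (ω : Ω) : ℝ :=
  τ * ((qsT α (qsS Y s ω) - ∑ k ∈ s, qsT α (Y k ω)) / N + 2 * ∑ j, G j * qsS Y s ω j)

/-- the predictable direction -/
noncomputable def qsV (Y : κ → Ω → ι → ℝ) (α G : ι → ℝ) (N τ : ℝ) (s : Finset κ) (ω : Ω) (j : ι) : ℝ :=
  2 * τ * (α j * qsS Y s ω j / N + G j)

lemma qsM_insert (α G : ι → ℝ) (N τ : ℝ) {s : Finset κ} {i : κ} (hi : i ∉ s) (ω : Ω) :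
    qsM Y α G N τ (insert i s) ω = qsM Y α G N τ s ω + ∑ j, qsV Y α G N τ s ω j * Y i ω j := by
  simp only [qsM, qsV, qsT, qsS_insert hi, Finset.sum_insert hi]
  have e1 : ∑ j, α j * (qsS Y s ω j + Y i ω j) ^ 2 = ∑ j, α j * qsS Y s ω j ^ 2 +
      2 * ∑ j, α j * qsS Y s ω j * Y i ω j + ∑ j, α j * Y i ω j ^ 2 := by
    rw [Finset.mul_sum, ← Finset.sum_add_distrib, ← Finset.sum_add_distrib]
    exact Finset.sum_congr rfl fun j _ => by ring
  have e2 : ∑ j, G j * (qsS Y s ω j + Y i ω j) = ∑ j, G j * qsS Y s ω j + ∑ j, G j * Y i ω j := by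
    rw [← Finset.sum_add_distrib]
    exact Finset.sum_congr rfl fun j _ => by ring
  have e3 : ∑ j, 2 * τ * (α j * qsS Y s ω j / N + G j) * Y i ω j =
      2 * τ * ((∑ j, α j * qsS Y s ω j * Y i ω j) / N + ∑ j, G j * Y i ω j) := by
    rw [Finset.sum_div, ← Finset.sum_add_distrib, Finset.mul_sum]
    exact Finset.sum_congr rfl fun j _ => by ring
  rw [e1, e2, e3]
  ring


lemma qsV_pt (h : ∀ i, QsStd P (Y i) C) {α : ι → ℝ} (hα : ∀ j, α j * α j = α j)
    (G : ι → ℝ) {N : ℝ} (τ : ℝ) (s : Finset κ) (ω : Ω) :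
    ∑ j, qsV Y α G N τ s ω j ^ 2 - 4 * τ ^ 2 * (s.card * (∑ j, α j) / N ^ 2 + ∑ j, G j ^ 2) =
      4 * τ ^ 2 * ((qsT α (qsS Y s ω) - s.card * ∑ j, α j) / N ^ 2 +
        2 / N * ∑ j, (α j * G j) * qsS Y s ω j) := by
  have : ∑ j, qsV Y α G N τ s ω j ^ 2 = 4 * τ ^ 2 * (qsT α (qsS Y s ω) / N ^ 2 +
      2 / N * ∑ j, (α j * G j) * qsS Y s ω j + ∑ j, G j ^ 2) := by
    simp only [qsV, qsT]
    rw [Finset.sum_div, Finset.mul_sum, ← Finset.sum_add_distrib, ← Finset.sum_add_distrib,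
      Finset.mul_sum]
    refine Finset.sum_congr rfl fun j _ => ?_
    have : (2 * τ * (α j * qsS Y s ω j / N + G j)) ^ 2 =
      4 * τ ^ 2 * ((α j * α j) * qsS Y s ω j ^ 2 / N ^ 2 + 2 / N * (α j * G j * qsS Y s ω j) + G j ^ 2) := by ring
    rw [this, hα]
  rw [this]; ring

lemma qsL_memLp (h : ∀ i, QsStd P (Y i) C) {α : ι → ℝ} (hα : ∀ j, α j * α j = α j)
    (b : ι → ℝ) (s : Finset κ) : MemLp (fun ω => ∑ j, b j * qsS Y s ω j) 2 P :=
  memLp_finsetSum _ fun j _ => ((qsS_memLp h s j).mono_exponent (by norm_num)).const_mul _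

lemma qsV_memLp (h : ∀ i, QsStd P (Y i) C) {α : ι → ℝ} (hα : ∀ j, α j * α j = α j)
    (G : ι → ℝ) (N : ℝ) (τ : ℝ) (s : Finset κ) :
    MemLp (fun ω => ∑ j, qsV Y α G N τ s ω j ^ 2
      - 4 * τ ^ 2 * (s.card * (∑ j, α j) / N ^ 2 + ∑ j, G j ^ 2)) 2 P := by
  have e : (fun ω => ∑ j, qsV Y α G N τ s ω j ^ 2
      - 4 * τ ^ 2 * (s.card * (∑ j, α j) / N ^ 2 + ∑ j, G j ^ 2)) =
      fun ω => 4 * τ ^ 2 * ((N ^ 2)⁻¹ * (qsT α (qsS Y s ω) - s.card * ∑ j, α j) +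
        2 / N * ∑ j, (α j * G j) * qsS Y s ω j) := by
    funext ω
    rw [qsV_pt h hα, div_eq_inv_mul]
  rw [e]
  have m1 : MemLp (fun ω => (N ^ 2)⁻¹ * (qsT α (qsS Y s ω) - s.card * ∑ j, α j)) 2 P :=
    (qsQ_memLp h hα s).const_mul _
  have m2 : MemLp (fun ω => 2 / N * ∑ j, (α j * G j) * qsS Y s ω j) 2 P :=
    (qsL_memLp h hα (fun j => α j * G j) s).const_mul _
  have m3 : MemLp (fun ω => (N ^ 2)⁻¹ * (qsT α (qsS Y s ω) - s.card * ∑ j, α j) +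
        2 / N * ∑ j, (α j * G j) * qsS Y s ω j) 2 P := m1.add m2
  exact m3.const_mul _

lemma qsV_sq (h : ∀ i, QsStd P (Y i) C) {α : ι → ℝ} (hα : ∀ j, α j * α j = α j)
    (hind : iIndepFun Y P) (hC : 0 ≤ C) (G : ι → ℝ) {N : ℝ} (hN : 0 < N) (τ : ℝ)
    (s : Finset κ) (hs : (s.card : ℝ) ≤ N) :
    ∫ ω, (∑ j, qsV Y α G N τ s ω j ^ 2
      - 4 * τ ^ 2 * (s.card * (∑ j, α j) / N ^ 2 + ∑ j, G j ^ 2)) ^ 2 ∂P ≤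
      32 * τ ^ 4 * (8 * (∑ j, α j) + 2 * (C + 1) * (∑ j, α j) ^ 2 / N + 4 * (N * ∑ j, G j ^ 2)) / N ^ 2 := by
  have mem := qsV_memLp h hα G N τ s
  simp_rw [qsV_pt h hα] at mem ⊢
  have hα0 : ∀ j, 0 ≤ α j := fun j => by rw [← hα j]; exact mul_self_nonneg _
  have hQ := qsQ_sq h hα hind s
  have hL := qsS_lin_sq h hind s (fun j => α j * G j)
  have mQ := qsQ_memLp h hα s
  have mL := qsL_memLp h hα (fun j => α j * G j) s
  set d := ∑ j, α j with hd
  have hd0 : 0 ≤ d := Finset.sum_nonneg fun j _ => hα0 j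
  have hg : ∑ j, (α j * G j) ^ 2 ≤ ∑ j, G j ^ 2 := by
    refine Finset.sum_le_sum fun j _ => ?_
    have : α j ≤ 1 := by nlinarith [hα j, hα0 j]
    rw [mul_pow, sq (α j), hα]
    nlinarith [sq_nonneg (G j)]
  have hg0 : 0 ≤ ∑ j, G j ^ 2 := Finset.sum_nonneg fun j _ => sq_nonneg _
  set g := ∑ j, G j ^ 2
  have hs0 : (0 : ℝ) ≤ s.card := Nat.cast_nonneg _
  have hL' : ∫ ω, (∑ j, α j * G j * qsS Y s ω j) ^ 2 ∂P ≤ N * g := by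
    rw [hL]
    exact mul_le_mul hs hg (Finset.sum_nonneg fun j _ => sq_nonneg _) hN.le
  have hQ' : ∫ ω, (qsT α (qsS Y s ω) - s.card * d) ^ 2 ∂P ≤ 8 * N ^ 2 * d + 2 * (C + 1) * N * d ^ 2 := by
    refine hQ.trans ?_
    gcongr
  have i1 := mQ.integrable_sq.const_mul (32 * τ ^ 4 / N ^ 4)
  have i2 := mL.integrable_sq.const_mul (128 * τ ^ 4 / N ^ 2)
  calc _ ≤ ∫ ω, (32 * τ ^ 4 / N ^ 4 * (qsT α (qsS Y s ω) - s.card * d) ^ 2 +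
        128 * τ ^ 4 / N ^ 2 * (∑ j, α j * G j * qsS Y s ω j) ^ 2) ∂P := by
        refine integral_mono mem.integrable_sq (i1.add i2) fun ω => ?_
        show (4 * τ ^ 2 * ((qsT α (qsS Y s ω) - s.card * d) / N ^ 2 +
          2 / N * ∑ j, (α j * G j) * qsS Y s ω j)) ^ 2 ≤ _
        generalize qsT α (qsS Y s ω) - s.card * d = a
        generalize ∑ j, (α j * G j) * qsS Y s ω j = b
        have : 32 * τ ^ 4 / N ^ 4 * a ^ 2 + 128 * τ ^ 4 / N ^ 2 * b ^ 2 -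
          (4 * τ ^ 2 * (a / N ^ 2 + 2 / N * b)) ^ 2 = (4 * τ ^ 2 * (a / N ^ 2 - 2 / N * b)) ^ 2 := by
          field_simp
          ring
        linarith [sq_nonneg (4 * τ ^ 2 * (a / N ^ 2 - 2 / N * b))]
    _ = 32 * τ ^ 4 / N ^ 4 * (∫ ω, (qsT α (qsS Y s ω) - s.card * d) ^ 2 ∂P) +
        128 * τ ^ 4 / N ^ 2 * ∫ ω, (∑ j, α j * G j * qsS Y s ω j) ^ 2 ∂P := by
        rw [integral_add i1 i2, integral_const_mul, integral_const_mul]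
    _ ≤ 32 * τ ^ 4 / N ^ 4 * (8 * N ^ 2 * d + 2 * (C + 1) * N * d ^ 2) +
        128 * τ ^ 4 / N ^ 2 * (N * g) := by gcongr
    _ = _ := by
        field_simp
        ring

lemma qsM_meas (h : ∀ i, QsStd P (Y i) C) {α : ι → ℝ} (hα : ∀ j, α j * α j = α j)
    (G : ι → ℝ) (N τ : ℝ) (s : Finset κ) : Measurable (qsM Y α G N τ s) := by
  have h1 := qsS_meas h s
  have h2 : ∀ i, Measurable (Y i) := fun i => (h i).meas
  have h3 : Measurable fun ω => ∑ k ∈ s, qsT α (Y k ω) :=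
    Finset.measurable_fun_sum _ fun i _ => (qs_meas_T α).comp (h2 i)
  have h4 : Measurable fun ω => qsT α (qsS Y s ω) := (qs_meas_T α).comp h1
  have h5 : Measurable fun ω => ∑ j, G j * qsS Y s ω j := by fun_prop
  unfold qsM
  exact (((h4.sub h3).div_const _).add (h5.const_mul _)).const_mul _

lemma qsV_meas (h : ∀ i, QsStd P (Y i) C) {α : ι → ℝ} (hα : ∀ j, α j * α j = α j)
    (G : ι → ℝ) (N τ : ℝ) (s : Finset κ) : Measurable (qsV Y α G N τ s) := by
  have h1 := qsS_meas h s
  unfold qsV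
  fun_prop

lemma qsMV_indep (h : ∀ i, QsStd P (Y i) C) {α : ι → ℝ} (hα : ∀ j, α j * α j = α j)
    (hind : iIndepFun Y P) (G : ι → ℝ) (N τ : ℝ) {s : Finset κ} {i : κ} (hi : i ∉ s) :
    IndepFun (fun ω => (qsM Y α G N τ s ω, qsV Y α G N τ s ω)) (Y i) P := by
  have h1 := qs_indep (fun i => (h i).meas) hind α hi
  have hm : Measurable fun z : (ι → ℝ) × ℝ =>
      (τ * ((qsT α z.1 - z.2) / N + 2 * ∑ j, G j * z.1 j),
        fun j => 2 * τ * (α j * z.1 j / N + G j)) := by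
    have : Measurable fun z : (ι → ℝ) × ℝ => qsT α z.1 := (qs_meas_T α).comp measurable_fst
    refine Measurable.prodMk ?_ (by fun_prop)
    have h5 : Measurable fun z : (ι → ℝ) × ℝ => ∑ j, G j * z.1 j := by fun_prop
    exact (((this.sub measurable_snd).div_const _).add (h5.const_mul _)).const_mul _
  exact h1.comp hm measurable_id

/-- characteristic function of the martingale part -/
lemma qs_char_M (h : ∀ i, QsStd P (Y i) C) {α : ι → ℝ} (hα : ∀ j, α j * α j = α j)
    (hind : iIndepFun Y P) (hC : 0 ≤ C) (G : ι → ℝ) {N : ℝ} (hN : 0 < N) (τ : ℝ)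
    {r ε w : ℝ} (hr : 0 ≤ r) (hε : 0 < ε)
    (hrD : 32 * τ ^ 4 * (8 * (∑ j, α j) + 2 * (C + 1) * (∑ j, α j) ^ 2 / N + 4 * (N * ∑ j, G j ^ 2)) / N ^ 2 ≤ r ^ 2)
    (hw : 4 * τ ^ 2 * ((∑ j, α j) / N + ∑ j, G j ^ 2) ≤ w)
    (s : Finset κ) (hs : (s.card : ℝ) ≤ N) :
    ‖∫ ω, Complex.exp (Complex.I * (qsM Y α G N τ s ω : ℂ)) ∂P -
      Complex.exp (((-((∑ k ∈ Finset.range s.card,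
        4 * τ ^ 2 * (k * (∑ j, α j) / N ^ 2 + ∑ j, G j ^ 2)) / 2) : ℝ)) : ℂ)‖ ≤
      s.card * ((1 / 2 + 2 * ε) * r + 2 * ε * w + 2 * C / ε * (2 * w ^ 2 + 2 * r ^ 2) + w ^ 2) := by
  have hα0 : ∀ j, 0 ≤ α j := fun j => by rw [← hα j]; exact mul_self_nonneg _
  have hd0 : 0 ≤ ∑ j, α j := Finset.sum_nonneg fun j _ => hα0 j
  have hg0 : 0 ≤ ∑ j, G j ^ 2 := Finset.sum_nonneg fun j _ => sq_nonneg _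
  induction s using Finset.induction_on with
  | empty => simp [qsM, qsT, qsS]
  | insert i s hi ih =>
    have hcard : ((insert i s).card : ℝ) = s.card + 1 := by
      rw [Finset.card_insert_of_notMem hi]; push_cast; ring
    rw [hcard] at hs
    have hs' : (s.card : ℝ) ≤ N := by linarith
    specialize ih hs'
    rw [hcard, Finset.card_insert_of_notMem hi, Finset.sum_range_succ]
    set wk := 4 * τ ^ 2 * (s.card * (∑ j, α j) / N ^ 2 + ∑ j, G j ^ 2) with hwk
    have hwk0 : 0 ≤ wk := by positivity
    have hwkw : wk ≤ w := by
      refine le_trans ?_ hw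
      rw [hwk]
      have : s.card * (∑ j, α j) / N ^ 2 ≤ (∑ j, α j) / N := by
        rw [div_le_div_iff₀ (by positivity) hN]
        nlinarith [mul_le_mul_of_nonneg_right hs' (mul_nonneg hd0 hN.le)]
      exact mul_le_mul_of_nonneg_left (by linarith) (by positivity)
    have st := (h i).step (qsM_meas h hα G N τ s) (qsV_meas h hα G N τ s)
      (qsMV_indep h hα hind G N τ hi) hC hwk0 hr hε (qsV_memLp h hα G N τ s)
      ((qsV_sq h hα hind hC G hN τ s hs').trans hrD)
    simp_rw [← qsM_insert α G N τ hi] at st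
    set Φ := ∑ k ∈ Finset.range s.card, 4 * τ ^ 2 * (k * (∑ j, α j) / N ^ 2 + ∑ j, G j ^ 2)
    set X' := ∫ ω, Complex.exp (Complex.I * (qsM Y α G N τ (insert i s) ω : ℂ)) ∂P
    set X := ∫ ω, Complex.exp (Complex.I * (qsM Y α G N τ s ω : ℂ)) ∂P
    have e : X' - Complex.exp (((-((Φ + wk) / 2) : ℝ)) : ℂ) =
      (X' - Complex.exp (((-(wk / 2) : ℝ)) : ℂ) * X) +
        Complex.exp (((-(wk / 2) : ℝ)) : ℂ) * (X - Complex.exp (((-(Φ / 2) : ℝ)) : ℂ)) := by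
      have : Complex.exp (((-((Φ + wk) / 2) : ℝ)) : ℂ) =
          Complex.exp (((-(wk / 2) : ℝ)) : ℂ) * Complex.exp (((-(Φ / 2) : ℝ)) : ℂ) := by
        rw [← Complex.exp_add]; push_cast; ring_nf
      rw [this]; ring
    have hle1 : ‖Complex.exp (((-(wk / 2) : ℝ)) : ℂ)‖ ≤ 1 := by
      rw [← Complex.ofReal_exp, Complex.norm_real, Real.norm_eq_abs, abs_of_pos (Real.exp_pos _)]
      exact Real.exp_le_one_iff.2 (by linarith)
    have hmono : (1 / 2 + 2 * ε) * r + 2 * ε * wk + 2 * C / ε * (2 * wk ^ 2 + 2 * r ^ 2) + wk ^ 2 ≤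
      (1 / 2 + 2 * ε) * r + 2 * ε * w + 2 * C / ε * (2 * w ^ 2 + 2 * r ^ 2) + w ^ 2 := by
      gcongr
    rw [e]
    refine (norm_add_le _ _).trans ?_
    rw [norm_mul]
    have := mul_le_mul hle1 ih (norm_nonneg _) zero_le_one
    linarith

end single

section final
set_option linter.unusedSectionVars false
variable {Ω ι κ : Type*} [Fintype ι] [DecidableEq ι] [DecidableEq κ] [Fintype κ] [MeasurableSpace Ω]
  {P : Measure Ω} [IsProbabilityMeasure P] {Y : κ → Ω → ι → ℝ} {C : ℝ}

lemma qs_exp_diff (a b : ℝ) :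
    ‖Complex.exp (Complex.I * (a : ℂ)) - Complex.exp (Complex.I * (b : ℂ))‖ ≤ |a - b| := by
  have e : Complex.exp (Complex.I * (a : ℂ)) - Complex.exp (Complex.I * (b : ℂ)) =
      Complex.exp (Complex.I * (b : ℂ)) * (Complex.exp (Complex.I * ((a - b : ℝ) : ℂ)) - 1) := by
    rw [mul_sub, ← Complex.exp_add, mul_one]
    push_cast; ring_nf
  rw [e, norm_mul, mul_comm Complex.I (b : ℂ), Complex.norm_exp_ofReal_mul_I, one_mul]
  exact Real.norm_exp_I_mul_ofReal_sub_one_le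

lemma qs_rexp_diff {a b : ℝ} (ha : a ≤ b) (hb : b ≤ 0) : |Real.exp a - Real.exp b| ≤ b - a := by
  rw [abs_sub_comm, abs_of_nonneg (sub_nonneg.2 (Real.exp_le_exp.2 ha))]
  have h1 := Real.add_one_le_exp (a - b)
  have h2 : Real.exp a = Real.exp (a - b) * Real.exp b := by rw [← Real.exp_add]; ring_nf
  have h3 : Real.exp b ≤ 1 := Real.exp_le_one_iff.2 hb
  have h4 := Real.exp_pos b
  nlinarith

/-- the explicit error bound -/
noncomputable def qsF (C t N σ2 d : ℝ) : ℝ :=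
  ((1 / 2 + 2 * (√N)⁻¹) * √(32 * t ^ 4 * (5 / σ2 + (C + 1) / (2 * N))) + 2 * (√N)⁻¹ * (3 * t ^ 2)
    + 2 * C * (√N)⁻¹ * (2 * (3 * t ^ 2) ^ 2 + 2 * √(32 * t ^ 4 * (5 / σ2 + (C + 1) / (2 * N))) ^ 2)
    + (3 * t ^ 2) ^ 2 / N) + t ^ 2 / (2 * N) + √(t ^ 2 * (C + 1) * d / (2 * N))

lemma qs_char_W (h : ∀ i, QsStd P (Y i) C) {α : ι → ℝ} (hα : ∀ j, α j * α j = α j)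
    (hind : iIndepFun Y P) (hC : 0 ≤ C) (G : ι → ℝ) {N : ℝ} (hN : 0 < N)
    (hcard : (Fintype.card κ : ℝ) = N) {σ2 d : ℝ} (hd : d = ∑ j, α j)
    (hσ : σ2 = 2 * (d + 2 * (N * ∑ j, G j ^ 2))) (hσ0 : 0 < σ2) (t : ℝ) :
    ‖∫ ω, Complex.exp (Complex.I * ((t * ((qsT α (qsS Y Finset.univ ω) / N
        + 2 * (∑ j, G j * qsS Y Finset.univ ω j) - d) / √σ2) : ℝ) : ℂ)) ∂P
      - Complex.exp (((-(t ^ 2 / 2) : ℝ)) : ℂ)‖ ≤ qsF C t N σ2 d := by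
  set g := ∑ j, G j ^ 2 with hg
  have hα0 : ∀ j, 0 ≤ α j := fun j => by rw [← hα j]; exact mul_self_nonneg _
  have hd0 : 0 ≤ d := by rw [hd]; exact Finset.sum_nonneg fun j _ => hα0 j
  have hg0 : 0 ≤ g := Finset.sum_nonneg fun j _ => sq_nonneg _
  have hNg : 0 ≤ N * g := by positivity
  set τ := t / √σ2 with hτ
  have hs2 : √σ2 ^ 2 = σ2 := Real.sq_sqrt hσ0.le
  have hτ2 : τ ^ 2 = t ^ 2 / σ2 := by rw [hτ, div_pow, hs2]
  have hτ4 : τ ^ 4 = t ^ 4 / σ2 ^ 2 := by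
    rw [show τ ^ 4 = (τ ^ 2) ^ 2 by ring, hτ2, div_pow]; ring
  set η2 := 32 * t ^ 4 * (5 / σ2 + (C + 1) / (2 * N)) with hη2
  have hη20 : 0 ≤ η2 := by positivity
  have hsN : 0 < √N := Real.sqrt_pos.2 hN
  -- martingale part
  have key := qs_char_M h hα hind hC G hN τ (r := √η2 / N) (ε := (√N)⁻¹) (w := 3 * t ^ 2 / N)
    (by positivity) (by positivity) (by
      rw [← hd, ← hg, hτ4, div_pow (√η2) N 2, Real.sq_sqrt hη20]
      refine div_le_div_of_nonneg_right ?_ (by positivity)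
      rw [hη2]
      have h1 : 8 * d + 2 * (C + 1) * d ^ 2 / N + 4 * (N * g) ≤
          σ2 ^ 2 * (5 / σ2 + (C + 1) / (2 * N)) := by
        have e : σ2 ^ 2 * (5 / σ2 + (C + 1) / (2 * N)) = 5 * σ2 + 2 * (C + 1) * (σ2 / 2) ^ 2 / N := by
          field_simp
        rw [e]
        have h2 : d ≤ σ2 / 2 := by linarith
        have h3 : 2 * (C + 1) * d ^ 2 / N ≤ 2 * (C + 1) * (σ2 / 2) ^ 2 / N := by gcongr
        linarith
      calc _ ≤ 32 * (t ^ 4 / σ2 ^ 2) * (σ2 ^ 2 * (5 / σ2 + (C + 1) / (2 * N))) := by gcongr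
        _ = _ := by field_simp)
    (by
      rw [← hd, ← hg, hτ2]
      have e : 4 * (t ^ 2 / σ2) * (d / N + g) = t ^ 2 * (4 * (d + N * g) / σ2) / N := by field_simp
      rw [e]
      refine div_le_div_of_nonneg_right ?_ hN.le
      have : 4 * (d + N * g) / σ2 ≤ 3 := by rw [div_le_iff₀ hσ0]; linarith
      nlinarith [sq_nonneg t])
    Finset.univ (by rw [Finset.card_univ, hcard])
  rw [Finset.card_univ, hcard, ← hd, ← hg] at key
  have hsum : ∑ k ∈ Finset.range (Fintype.card κ), 4 * τ ^ 2 * (k * d / N ^ 2 + g) =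
      t ^ 2 - 2 * t ^ 2 * d / (N * σ2) := by
    have hk : ∀ m : ℕ, ∑ k ∈ Finset.range m, 4 * τ ^ 2 * (k * d / N ^ 2 + g) =
      4 * τ ^ 2 * ((m : ℝ) * (m - 1) / 2 * d / N ^ 2 + m * g) := by
      intro m
      induction m with
      | zero => simp
      | succ m ih => rw [Finset.sum_range_succ, ih]; push_cast; ring
    rw [hk, hcard, hτ2]
    have : N * g = (σ2 / 2 - d) / 2 := by linarith
    rw [this]
    field_simp
    ring
  rw [hsum] at key
  -- the deterministic exponent
  have hexp : ‖Complex.exp (((-((t ^ 2 - 2 * t ^ 2 * d / (N * σ2)) / 2) : ℝ)) : ℂ) -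
      Complex.exp (((-(t ^ 2 / 2) : ℝ)) : ℂ)‖ ≤ t ^ 2 / (2 * N) := by
    rw [← Complex.ofReal_exp, ← Complex.ofReal_exp, ← Complex.ofReal_sub, Complex.norm_real,
      Real.norm_eq_abs, abs_sub_comm]
    have h1 : 2 * t ^ 2 * d / (N * σ2) ≤ t ^ 2 / N := by
      rw [div_le_div_iff₀ (by positivity) hN]
      have : 2 * d ≤ σ2 := by linarith
      have := mul_le_mul_of_nonneg_left this (by positivity : 0 ≤ t ^ 2 * N)
      linarith
    have h0 : 0 ≤ 2 * t ^ 2 * d / (N * σ2) := by positivity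
    have h2 : 2 * t ^ 2 * d / (N * σ2) ≤ t ^ 2 := by
      have : 0 ≤ t ^ 2 - 2 * t ^ 2 * d / (N * σ2) := by
        rw [← hsum]
        exact Finset.sum_nonneg fun k _ => by positivity
      linarith
    refine (qs_rexp_diff (by linarith) (by linarith)).trans ?_
    have : t ^ 2 / (2 * N) = t ^ 2 / N / 2 := by field_simp
    rw [this]; linarith
  -- the remainder
  have hR : ‖∫ ω, Complex.exp (Complex.I * ((t * ((qsT α (qsS Y Finset.univ ω) / N
        + 2 * (∑ j, G j * qsS Y Finset.univ ω j) - d) / √σ2) : ℝ) : ℂ)) ∂P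
      - ∫ ω, Complex.exp (Complex.I * (qsM Y α G N τ Finset.univ ω : ℂ)) ∂P‖ ≤
      √(t ^ 2 * (C + 1) * d / (2 * N)) := by
    have hdiff : ∀ ω, t * ((qsT α (qsS Y Finset.univ ω) / N
        + 2 * (∑ j, G j * qsS Y Finset.univ ω j) - d) / √σ2) - qsM Y α G N τ Finset.univ ω =
        τ / N * ∑ i, (qsT α (Y i ω) - ∑ j, α j) := by
      intro ω
      rw [Finset.sum_sub_distrib, Finset.sum_const, Finset.card_univ, nsmul_eq_mul, hcard, ← hd, qsM,
        hτ]
      field_simp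
      ring
    have hMm := qsM_meas h hα G N τ Finset.univ
    have hRm : MemLp (fun ω => τ / N * ∑ i, (qsT α (Y i ω) - ∑ j, α j)) 2 P := by
      have : MemLp (fun ω => ∑ i, (qsT α (Y i ω) - ∑ j, α j)) 2 P :=
        memLp_finsetSum _ fun i _ => qsH_memLp h hα i
      exact this.const_mul _
    have hWm : Measurable fun ω => t * ((qsT α (qsS Y Finset.univ ω) / N
        + 2 * (∑ j, G j * qsS Y Finset.univ ω j) - d) / √σ2) := by
      have h1 := qsS_meas h (Finset.univ)
      have h4 : Measurable fun ω => qsT α (qsS Y Finset.univ ω) := (qs_meas_T α).comp h1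
      fun_prop
    have hbd : ∀ f : Ω → ℝ, Measurable f →
        Integrable (fun ω => Complex.exp (Complex.I * (f ω : ℂ))) P := by
      intro f hf
      refine Integrable.of_bound (C := 1) ?_ (ae_of_all _ fun ω => ?_)
      · exact (by fun_prop : Measurable fun ω => Complex.exp (Complex.I * (f ω : ℂ))).aestronglyMeasurable
      · rw [mul_comm]; exact (Complex.norm_exp_ofReal_mul_I _).le
    rw [← integral_sub (hbd _ hWm) (hbd _ hMm)]
    refine (norm_integral_le_integral_norm _).trans ?_
    refine le_trans (integral_mono ((hbd _ hWm).sub (hbd _ hMm)).norm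
      (hRm.integrable (by norm_num)).abs fun ω => ?_) (qs_abs_le hRm (Real.sqrt_nonneg _) ?_)
    · refine (qs_exp_diff _ _).trans ?_
      rw [hdiff]
    · rw [Real.sq_sqrt (by positivity)]
      simp_rw [mul_pow]
      rw [integral_const_mul]
      have := qsR_sq h hα hind Finset.univ
      rw [Finset.card_univ, hcard, ← hd] at this
      rw [← hd]
      calc _ ≤ (τ / N) ^ 2 * (N * ((C + 1) * d ^ 2)) := by gcongr
        _ = t ^ 2 * (C + 1) * d * (d / σ2) / N := by
            rw [div_pow, hτ2]; field_simp
        _ ≤ t ^ 2 * (C + 1) * d * (1 / 2) / N := by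
            have : d / σ2 ≤ 1 / 2 := by
              rw [div_le_div_iff₀ hσ0 (by norm_num)]; linarith
            gcongr
        _ = _ := by field_simp
  have hmain : N * ((1 / 2 + 2 * (√N)⁻¹) * (√η2 / N) + 2 * (√N)⁻¹ * (3 * t ^ 2 / N) +
      2 * C / (√N)⁻¹ * (2 * (3 * t ^ 2 / N) ^ 2 + 2 * (√η2 / N) ^ 2) + (3 * t ^ 2 / N) ^ 2) =
      ((1 / 2 + 2 * (√N)⁻¹) * √η2 + 2 * (√N)⁻¹ * (3 * t ^ 2)
    + 2 * C * (√N)⁻¹ * (2 * (3 * t ^ 2) ^ 2 + 2 * √η2 ^ 2)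
    + (3 * t ^ 2) ^ 2 / N) := by
    obtain ⟨y, hy, hyN⟩ : ∃ y, 0 < y ∧ N = y ^ 2 := ⟨√N, hsN, (Real.sq_sqrt hN.le).symm⟩
    have hy2 : √N = y := by rw [hyN, Real.sqrt_sq hy.le]
    rw [hy2, hyN]
    field_simp
    try ring
  rw [hmain] at key
  unfold qsF
  rw [← hη2]
  set A := ∫ ω, Complex.exp (Complex.I * ((t * ((qsT α (qsS Y Finset.univ ω) / N
        + 2 * (∑ j, G j * qsS Y Finset.univ ω j) - d) / √σ2) : ℝ) : ℂ)) ∂P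
  set B := ∫ ω, Complex.exp (Complex.I * (qsM Y α G N τ Finset.univ ω : ℂ)) ∂P
  set D := Complex.exp (((-((t ^ 2 - 2 * t ^ 2 * d / (N * σ2)) / 2) : ℝ)) : ℂ)
  have e : A - Complex.exp (((-(t ^ 2 / 2) : ℝ)) : ℂ) = (A - B) + ((B - D) +
    (D - Complex.exp (((-(t ^ 2 / 2) : ℝ)) : ℂ))) := by ring
  rw [e]
  refine (norm_add_le _ _).trans ?_
  have := norm_add_le (B - D) (D - Complex.exp (((-(t ^ 2 / 2) : ℝ)) : ℂ))
  linarith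

lemma qsF_tendsto (C t : ℝ) {N σ2 d : ℕ → ℝ} (hN : Tendsto N atTop atTop)
    (hσ : Tendsto σ2 atTop atTop) (hd : Tendsto (fun n => d n / N n) atTop (nhds 0)) :
    Tendsto (fun n => qsF C t (N n) (σ2 n) (d n)) atTop (nhds 0) := by
  have h1 : Tendsto (fun n => (√(N n))⁻¹) atTop (nhds 0) :=
    tendsto_inv_atTop_zero.comp (Real.tendsto_sqrt_atTop.comp hN)
  have h2 : Tendsto (fun n => (N n)⁻¹) atTop (nhds 0) := tendsto_inv_atTop_zero.comp hN
  have h3 : Tendsto (fun n => (σ2 n)⁻¹) atTop (nhds 0) := tendsto_inv_atTop_zero.comp hσ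
  have h4 : Tendsto (fun n => √(32 * t ^ 4 * (5 / σ2 n + (C + 1) / (2 * N n)))) atTop (nhds 0) := by
    have : Tendsto (fun n => 32 * t ^ 4 * (5 * (σ2 n)⁻¹ + (C + 1) / 2 * (N n)⁻¹)) atTop
      (nhds (32 * t ^ 4 * (5 * 0 + (C + 1) / 2 * 0))) :=
      ((h3.const_mul 5).add (h2.const_mul _)).const_mul _
    have := this.sqrt
    simp only [mul_zero, add_zero, Real.sqrt_zero] at this
    refine this.congr fun n => ?_
    congr 1
    rw [div_eq_mul_inv, div_eq_mul_inv (C + 1) (2 * N n), mul_inv]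
    ring
  have h5 : Tendsto (fun n => √(t ^ 2 * (C + 1) * d n / (2 * N n))) atTop (nhds 0) := by
    have := (hd.const_mul (t ^ 2 * (C + 1) / 2)).sqrt
    simp only [mul_zero, Real.sqrt_zero] at this
    refine this.congr fun n => ?_
    congr 1
    rw [div_eq_mul_inv (d n), div_eq_mul_inv _ (2 * N n), mul_inv]
    ring
  have := (((((h1.const_mul 2).const_add (1 / 2)).mul h4).add ((h1.const_mul 2).mul_const (3 * t ^ 2))).add
    ((h1.const_mul (2 * C)).mul (((h4.pow 2).const_mul 2).const_add (2 * (3 * t ^ 2) ^ 2)))).add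
    (h2.const_mul ((3 * t ^ 2) ^ 2)) |>.add (h2.const_mul (t ^ 2 / 2)) |>.add h5
  simp only [mul_zero, add_zero, zero_mul] at this
  refine this.congr fun n => ?_
  unfold qsF
  rw [div_eq_mul_inv (t ^ 2) (2 * N n), mul_inv, div_eq_mul_inv _ (N n)]
  ring

end final

lemma qs_std_of {Ω ι : Type*} [Fintype ι] [DecidableEq ι] [MeasurableSpace Ω] {P : Measure Ω}
    [IsProbabilityMeasure P] {Y : Ω → ι → ℝ} {C : ℝ} (hm : Measurable Y)
    (hmean : ∀ j, ∫ ω, Y ω j ∂P = 0)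
    (hcov : ∀ j l, ∫ ω, Y ω j * Y ω l ∂P = if j = l then (1 : ℝ) else 0)
    (h6 : ∀ j, Integrable (fun ω => (Y ω j) ^ 6) P) (hC : 0 ≤ C)
    (h4 : ∀ a : ι → ℝ, (∑ j, (a j) ^ 2) = 1 → ∫ ω, (∑ j, a j * Y ω j) ^ 4 ∂P ≤ C) :
    QsStd P Y C where
  meas := hm
  memLp j := by
    have hj : Measurable fun ω => Y ω j := (measurable_pi_apply j).comp hm
    have h : MemLp (fun ω => Y ω j) 6 P := by
      rw [← integrable_norm_rpow_iff hj.aestronglyMeasurable (by norm_num) (by norm_num)]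
      refine (h6 j).congr (Eventually.of_forall fun ω => ?_)
      have e : (6 : ENNReal).toReal = ((6 : ℕ) : ℝ) := by norm_num
      simp only [e]
      rw [Real.rpow_natCast, Real.norm_eq_abs, (by decide : Even 6).pow_abs]
    exact h.mono_exponent (by norm_num)
  mean := hmean
  cov := hcov
  m4 a := by
    have hs : 0 ≤ ∑ j, a j ^ 2 := Finset.sum_nonneg fun j _ => sq_nonneg _
    rcases hs.eq_or_lt with h0 | hpos
    · have ha : ∀ j, a j = 0 := fun j => by
        have := (Finset.sum_eq_zero_iff_of_nonneg (fun j _ => sq_nonneg (a j))).1 h0.symm j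
          (Finset.mem_univ j)
        exact pow_eq_zero_iff (two_ne_zero) |>.1 this
      simp [ha]
    · set s := ∑ j, a j ^ 2 with hsd
      have hr : 0 < √s := Real.sqrt_pos.2 hpos
      have hr2 : √s ^ 2 = s := Real.sq_sqrt hs
      have h := h4 (fun j => a j / √s) (by
        simp_rw [div_pow, hr2]
        rw [← Finset.sum_div, ← hsd, div_self hpos.ne'])
      have e : ∀ ω, (∑ j, a j * Y ω j) ^ 4 = s ^ 2 * (∑ j, a j / √s * Y ω j) ^ 4 := by
        intro ω
        have : ∑ j, a j / √s * Y ω j = (∑ j, a j * Y ω j) / √s := by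
          rw [Finset.sum_div]; exact Finset.sum_congr rfl fun j _ => by ring
        rw [this, div_pow, show √s ^ 4 = (√s ^ 2) ^ 2 by ring, hr2]
        field_simp
      simp_rw [e]
      rw [integral_const_mul, mul_comm]
      gcongr

lemma qs_cdf_of_char {Ω : ℕ → Type*} {mΩ : ∀ n, MeasurableSpace (Ω n)}
    (P : ∀ n, Measure (Ω n)) (hP : ∀ n, IsProbabilityMeasure (P n))
    (W : ∀ n, Ω n → ℝ) (hWm : ∀ n, Measurable (W n))
    (hchar : ∀ t : ℝ, Tendsto (fun n => charFun ((P n).map (W n)) t) atTop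
      (nhds (charFun (gaussianReal 0 1) t))) (t : ℝ) :
    Tendsto (fun n => ((P n) {ω | W n ω ≤ t}).toReal) atTop
        (nhds ((gaussianReal 0 1 (Set.Iic t)).toReal)) := by
  let μ : ℕ → ProbabilityMeasure ℝ := fun n =>
    ⟨(P n).map (W n), Measure.isProbabilityMeasure_map (hWm n).aemeasurable⟩
  let ν : ProbabilityMeasure ℝ := ⟨gaussianReal 0 1, inferInstance⟩
  have hconv : Tendsto μ atTop (nhds ν) :=
    ProbabilityMeasure.tendsto_iff_tendsto_charFun.2 hchar
  have hna : NullSingletonClass (gaussianReal (0 : ℝ) 1) :=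
    nullSingletonClass_gaussianReal one_ne_zero
  have h := ProbabilityMeasure.tendsto_measure_of_null_frontier_of_tendsto' hconv
    (E := Set.Iic t) (by
      rw [frontier_Iic]
      exact measure_singleton (μ := gaussianReal 0 1) t)
  have h2 := (ENNReal.tendsto_toReal (measure_ne_top (ν : Measure ℝ) (Set.Iic t))).comp h
  refine h2.congr fun n => ?_
  change ((P n).map (W n) (Set.Iic t)).toReal = _
  rw [Measure.map_apply (hWm n) measurableSet_Iic]
  rfl

/-- **Lemma 3**: martingale CLT for the quadratic statistic in the likelihood-ratio
expansion. For triangular arrays of i.i.d. mean-zero identity-covariance vectors in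
`ℝ^{p_n}` with bounded sixth coordinate moments and bounded third/fourth directional
moments, `p_n → ∞`, `p_n = o(n^{2/3})`, models `γ_n` with `d_n = p_n − |γ_n| → ∞` and
vectors `G_n` with `c√(p_n/n) ≤ ‖G_n‖ ≤ C√(p_n/n)`, the standardized statistic
`(n(‖Ȳ‖² − ‖Ȳ_{γ_n}‖²) + 2n G_nᵀȲ − d_n)/√(2(d_n + 2δ_n))`, `δ_n = n‖G_n‖²`,
converges in distribution to `N(0,1)`. -/
theorem quadratic_statistic_clt
    (C c : ℝ) (hC : 0 < C) (hc : 0 < c)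
    (p : ℕ → ℕ)
    (hp_top : Tendsto (fun n => p n) atTop atTop)
    (hpo : Tendsto (fun n => (p n : ℝ) / (n : ℝ) ^ ((2 : ℝ) / 3)) atTop (nhds 0))
    (Ω : ℕ → Type*) (mΩ : ∀ n, MeasurableSpace (Ω n))
    (P : ∀ n, Measure (Ω n)) (hP : ∀ n, IsProbabilityMeasure (P n))
    (Y : ∀ n, Fin n → Ω n → (Fin (p n) → ℝ))
    (hmeas : ∀ n i, Measurable (Y n i))
    (hindep : ∀ n, iIndepFun (Y n) (P n))
    (hident : ∀ n i i', Measure.map (Y n i) (P n) = Measure.map (Y n i') (P n))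
    -- mean zero and identity covariance
    (hmean : ∀ n i j, ∫ ω, Y n i ω j ∂(P n) = 0)
    (hcov : ∀ n i j l, ∫ ω, Y n i ω j * Y n i ω l ∂(P n) = if j = l then (1 : ℝ) else 0)
    -- bounded sixth coordinate moments
    (hm6int : ∀ n i j, Integrable (fun ω => (Y n i ω j) ^ 6) (P n))
    (hm6 : ∀ n i j, ∫ ω, (Y n i ω j) ^ 6 ∂(P n) ≤ C)
    -- bounded third and fourth directional moments, uniformly over unit vectors
    (hm3 : ∀ n i (a : Fin (p n) → ℝ), (∑ j, (a j) ^ 2) = 1 →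
      |∫ ω, (∑ j, a j * Y n i ω j) ^ 3 ∂(P n)| ≤ C)
    (hm4 : ∀ n i (a : Fin (p n) → ℝ), (∑ j, (a j) ^ 2) = 1 →
      ∫ ω, (∑ j, a j * Y n i ω j) ^ 4 ∂(P n) ≤ C)
    -- models with `d_n = p_n − |γ_n| → ∞`
    (γ : ∀ n, Finset (Fin (p n)))
    (hd_top : Tendsto (fun n => p n - (γ n).card) atTop atTop)
    -- vectors `G_n` with `c√(p_n/n) ≤ ‖G_n‖ ≤ C√(p_n/n)`
    (G : ∀ n, Fin (p n) → ℝ)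
    (hG : ∀ n, 0 < n →
      c * Real.sqrt ((p n : ℝ) / n) ≤ Real.sqrt (∑ j, (G n j) ^ 2) ∧
      Real.sqrt (∑ j, (G n j) ^ 2) ≤ C * Real.sqrt ((p n : ℝ) / n))
    -- the sample mean, its restriction to `γ_n`, and the standardized statistic
    (Ybar : ∀ n, Ω n → (Fin (p n) → ℝ))
    (hYbar : ∀ n ω j, Ybar n ω j = (∑ i : Fin n, Y n i ω j) / n)
    (δ : ℕ → ℝ) (hδ : ∀ n, δ n = n * ∑ j, (G n j) ^ 2)
    (W : ∀ n, Ω n → ℝ)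
    (hW : ∀ n ω, W n ω =
      ((n : ℝ) * ((∑ j, (Ybar n ω j) ^ 2) - ∑ j, (if j ∈ γ n then Ybar n ω j else 0) ^ 2)
          + 2 * n * (∑ j, G n j * Ybar n ω j)
          - ((p n : ℝ) - (γ n).card))
        / Real.sqrt (2 * (((p n : ℝ) - (γ n).card) + 2 * δ n))) :
    ∀ t : ℝ,
      Tendsto (fun n => ((P n) {ω | W n ω ≤ t}).toReal) atTop
        (nhds ((gaussianReal 0 1 (Set.Iic t)).toReal)) := by
  have hd_eq : ∀ n, ((p n : ℝ) - (γ n).card) = ∑ j, (if j ∈ γ n then (0 : ℝ) else 1) := by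
    intro n
    have h1 : ∀ j, (if j ∈ γ n then (0 : ℝ) else 1) = 1 - (if j ∈ γ n then (1 : ℝ) else 0) := by
      intro j; split_ifs <;> norm_num
    simp_rw [h1]
    rw [Finset.sum_sub_distrib]
    simp
  have hd0 : ∀ n, 0 ≤ ((p n : ℝ) - (γ n).card) := by
    intro n; rw [hd_eq]; exact Finset.sum_nonneg fun j _ => by split_ifs <;> norm_num
  have hstd : ∀ n i, QsStd (P n) (Y n i) C := by
    intro n i
    have := hP n
    exact qs_std_of (hmeas n i) (hmean n i) (hcov n i) (hm6int n i) hC.le (hm4 n i)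
  have hYm : ∀ n j, Measurable fun ω => Ybar n ω j := by
    intro n j
    simp_rw [hYbar]
    exact (Finset.measurable_fun_sum _ fun i _ =>
      (measurable_pi_apply j).comp (hmeas n i)).div_const _
  have hWm : ∀ n, Measurable (W n) := by
    intro n
    have e : W n = _ := funext (hW n)
    rw [e]
    have h1 : ∀ j, Measurable fun ω => (if j ∈ γ n then Ybar n ω j else 0) := by
      intro j; split_ifs
      · exact hYm n j
      · exact measurable_const
    have h2 := hYm n
    fun_prop
  set σ2 : ℕ → ℝ := fun n => 2 * (((p n : ℝ) - (γ n).card) + 2 * δ n) with hσ2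
  have hNtop : Tendsto (fun n : ℕ => (n : ℝ)) atTop atTop := tendsto_natCast_atTop_atTop
  have hσlow : ∀ᶠ n in atTop, 4 * c ^ 2 * (p n : ℝ) ≤ σ2 n := by
    filter_upwards [eventually_gt_atTop 0] with n hn
    have hn' : (0 : ℝ) < n := by exact_mod_cast hn
    have h1 := (hG n hn).1
    have h2 : (c * Real.sqrt ((p n : ℝ) / n)) ^ 2 ≤ Real.sqrt (∑ j, (G n j) ^ 2) ^ 2 :=
      pow_le_pow_left₀ (by positivity) h1 2
    rw [mul_pow, Real.sq_sqrt (by positivity),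
      Real.sq_sqrt (Finset.sum_nonneg fun j _ => sq_nonneg _)] at h2
    have h3 : c ^ 2 * (p n : ℝ) ≤ δ n := by
      rw [hδ]
      calc c ^ 2 * (p n : ℝ) = n * (c ^ 2 * ((p n : ℝ) / n)) := by field_simp
        _ ≤ _ := by gcongr
    have := hd0 n
    simp only [hσ2]
    linarith
  have hptop : Tendsto (fun n => (p n : ℝ)) atTop atTop := tendsto_natCast_atTop_atTop.comp hp_top
  have hσtop : Tendsto σ2 atTop atTop :=
    tendsto_atTop_mono' _ hσlow (hptop.const_mul_atTop (by positivity))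
  have hdN : Tendsto (fun n => ((p n : ℝ) - (γ n).card) / (n : ℝ)) atTop (nhds 0) := by
    refine tendsto_of_tendsto_of_tendsto_of_le_of_le' tendsto_const_nhds hpo ?_ ?_
    · exact Eventually.of_forall fun n => div_nonneg (hd0 n) (Nat.cast_nonneg _)
    · filter_upwards [eventually_gt_atTop 0] with n hn
      have hn' : (1 : ℝ) ≤ n := by exact_mod_cast hn
      have h1 : (n : ℝ) ^ ((2 : ℝ) / 3) ≤ n := by
        calc (n : ℝ) ^ ((2 : ℝ) / 3) ≤ (n : ℝ) ^ (1 : ℝ) :=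
              Real.rpow_le_rpow_of_exponent_le hn' (by norm_num)
          _ = n := Real.rpow_one _
      have h2 : 0 < (n : ℝ) ^ ((2 : ℝ) / 3) := Real.rpow_pos_of_pos (by linarith) _
      have h3 : ((p n : ℝ) - (γ n).card) ≤ p n := by
        have : (0 : ℝ) ≤ (γ n).card := Nat.cast_nonneg _
        linarith
      exact div_le_div₀ (Nat.cast_nonneg _) h3 h2 h1
  -- characteristic functions
  have hchar : ∀ t : ℝ, Tendsto (fun n => charFun ((P n).map (W n)) t) atTop
      (nhds (charFun (gaussianReal 0 1) t)) := by
    intro t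
    have hlim := qsF_tendsto C t hNtop hσtop hdN
    rw [tendsto_iff_norm_sub_tendsto_zero]
    refine squeeze_zero' (Eventually.of_forall fun n => norm_nonneg _) ?_ hlim
    filter_upwards [eventually_gt_atTop 0, hσtop.eventually_gt_atTop 0] with n hn hσpos
    have := hP n
    have hn' : (0 : ℝ) < n := by exact_mod_cast hn
    have key := qs_char_W (hstd n) (α := fun j => if j ∈ γ n then (0 : ℝ) else 1)
      (fun j => by split_ifs <;> norm_num) (hindep n) hC.le (G n) hn' (by simp)
      (hd_eq n) (σ2 := σ2 n) (by simp only [hσ2, hδ]) hσpos t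
    refine le_trans (le_of_eq ?_) key
    rw [charFun_gaussianReal, charFun_apply_real, integral_map (hWm n).aemeasurable
      (by fun_prop)]
    congr 2
    · refine integral_congr_ae (Eventually.of_forall fun ω => ?_)
      have e : W n ω = (qsT (fun j => if j ∈ γ n then (0 : ℝ) else 1) (qsS (Y n) Finset.univ ω) / n
          + 2 * (∑ j, G n j * qsS (Y n) Finset.univ ω j) - ((p n : ℝ) - (γ n).card)) / √(σ2 n) := by
        rw [hW]
        have hb : ∀ j, Ybar n ω j = qsS (Y n) Finset.univ ω j / n := fun j => hYbar n ω j
        congr 3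
        · rw [← Finset.sum_sub_distrib, Finset.mul_sum, qsT, Finset.sum_div]
          refine Finset.sum_congr rfl fun j _ => ?_
          rw [hb]
          split_ifs <;> field_simp <;> ring
        · rw [mul_assoc, Finset.mul_sum]
          congr 1
          refine Finset.sum_congr rfl fun j _ => ?_
          rw [hb]; field_simp
      simp only [e]
      congr 1
      push_cast; ring
    · congr 1
      push_cast; simp
  intro t
  exact qs_cdf_of_char P hP W hWm hchar t
end

section
/- Let Y₁ and Y₂ be random variables on a probability space and m > 0, 0 ≤ α ≤ 1 constants such that almost surely 0 ≤ Y₁ ≤ m and 0 ≤ Y₂ ≤ m, and E[Y₂] ≥ m(1 − α). Then for every 0 < Δ ≤ 1/2, P( Y₁/(Y₁ + Y₂) ≥ 1/2 + Δ ) ≤ α(1 + 2Δ)/(4Δ), where the ratio is interpreted as 0 on the event Y₁ + Y₂ = 0. -/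
open MeasureTheory

/-- **Markov-inequality step in the proof of Theorem 4 (ii)**: if `0 ≤ Y₁ ≤ m` and
`0 ≤ Y₂ ≤ m` almost surely and `E[Y₂] ≥ m(1-α)`, then for any `0 < Δ ≤ 1/2`,
`P(Y₁/(Y₁+Y₂) ≥ 1/2 + Δ) ≤ α(1+2Δ)/(4Δ)` (the ratio being `0` when `Y₁+Y₂ = 0`,
which is Lean's convention for division by zero). -/
theorem ratio_markov_bound
    (Ω : Type*) (mΩ : MeasurableSpace Ω) (P : Measure Ω) (hP : IsProbabilityMeasure P)
    (Y₁ Y₂ : Ω → ℝ) (hY₁ : Measurable Y₁) (hY₂ : Measurable Y₂)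
    (m : ℝ) (hm : 0 < m) (α : ℝ) (hα0 : 0 ≤ α) (hα1 : α ≤ 1)
    (hb₁ : ∀ᵐ ω ∂P, 0 ≤ Y₁ ω ∧ Y₁ ω ≤ m)
    (hb₂ : ∀ᵐ ω ∂P, 0 ≤ Y₂ ω ∧ Y₂ ω ≤ m)
    (hmean : m * (1 - α) ≤ ∫ ω, Y₂ ω ∂P) :
    ∀ Δ : ℝ, 0 < Δ → Δ ≤ 1 / 2 →
      P {ω | 1 / 2 + Δ ≤ Y₁ ω / (Y₁ ω + Y₂ ω)}
        ≤ ENNReal.ofReal (α * (1 + 2 * Δ) / (4 * Δ)) := by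
  intro Δ hΔ hΔ2
  have hint : Integrable Y₂ P := by
    refine Integrable.of_bound hY₂.aestronglyMeasurable m ?_
    filter_upwards [hb₂] with ω h
    rw [Real.norm_eq_abs, abs_of_nonneg h.1]
    exact h.2
  have hint' : Integrable (fun ω => m - Y₂ ω) P := (integrable_const m).sub hint
  have hnn : 0 ≤ᵐ[P] fun ω => m - Y₂ ω := by
    filter_upwards [hb₂] with ω h
    exact sub_nonneg.2 h.2
  have hI : ∫ ω, (m - Y₂ ω) ∂P ≤ m * α := by
    rw [integral_sub (integrable_const m) hint]
    simp
    linarith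
  have hpos : 0 < 1 + 2 * Δ := by linarith
  have hM := mul_meas_ge_le_integral_of_nonneg hnn hint' (m * (4 * Δ) / (1 + 2 * Δ))
  have hsub : P {ω | 1 / 2 + Δ ≤ Y₁ ω / (Y₁ ω + Y₂ ω)}
      ≤ P {ω | m * (4 * Δ) / (1 + 2 * Δ) ≤ m - Y₂ ω} := by
    apply measure_mono_ae
    filter_upwards [hb₁, hb₂] with ω h1 h2 h
    have h : 1 / 2 + Δ ≤ Y₁ ω / (Y₁ ω + Y₂ ω) := h
    change m * (4 * Δ) / (1 + 2 * Δ) ≤ m - Y₂ ω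
    have hs : 0 < Y₁ ω + Y₂ ω := by
      rcases (add_nonneg h1.1 h2.1).lt_or_eq with h0 | h0
      · exact h0
      · rw [← h0, div_zero] at h
        linarith
    rw [le_div_iff₀ hs] at h
    rw [div_le_iff₀ hpos]
    nlinarith [mul_nonneg (sub_nonneg.2 hΔ2) (sub_nonneg.2 h1.2)]
  refine hsub.trans ?_
  rw [← ofReal_measureReal]
  apply ENNReal.ofReal_le_ofReal
  rw [le_div_iff₀ (by positivity)]
  have h3 := hM.trans hI
  rw [div_mul_eq_mul_div, div_le_iff₀ hpos] at h3
  refine le_of_mul_le_mul_left ?_ hm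
  linarith
end
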